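/- arXiv:2106.16062 — 3 statements merged into one kernel-verified Lean document; each statement's English description precedes it below -/
import Mathlib

section
/- Let K = ℚ(ζ) be the 7th cyclotomic field with ζ a primitive 7th root of unity. Let g = diag(ζ^4, ζ^2, ζ), let h be the permutation matrix with rows (0,1,0), (0,0,1), (1,0,0), and let i = ((2ζ^4 + 2ζ^2 + 2ζ + 1)/7) · [[ζ-ζ^6, ζ^2-ζ^5, ζ^4-ζ^3],[ζ^2-ζ^5, ζ^4-ζ^3, ζ-ζ^6],[ζ^4-ζ^3, ζ-ζ^6, ζ^2-ζ^5]], all viewed as elements of GL_3(K). Then the subgroup of GL_3(K) generated by g, h, and i has exactly 168 elements. -/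
open scoped MatrixGroups

/-- The 7th cyclotomic field `K = ℚ(ζ)`. -/
noncomputable abbrev K7 : Type := CyclotomicField 7 ℚ

/-- The diagonal matrix `g = diag(ζ⁴, ζ², ζ)`. -/
noncomputable def matG (ζ : K7) : Matrix (Fin 3) (Fin 3) K7 :=
  Matrix.diagonal ![ζ ^ 4, ζ ^ 2, ζ]

/-- The cyclic permutation matrix `h`. -/
noncomputable def matH : Matrix (Fin 3) (Fin 3) K7 :=
  !![0, 1, 0; 0, 0, 1; 1, 0, 0]

/-- The matrix `i`, depending on a primitive 7th root of unity `ζ`. -/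
noncomputable def matI (ζ : K7) : Matrix (Fin 3) (Fin 3) K7 :=
  ((2 * ζ ^ 4 + 2 * ζ ^ 2 + 2 * ζ + 1) / 7) •
    !![ζ - ζ ^ 6, ζ ^ 2 - ζ ^ 5, ζ ^ 4 - ζ ^ 3;
       ζ ^ 2 - ζ ^ 5, ζ ^ 4 - ζ ^ 3, ζ - ζ ^ 6;
       ζ ^ 4 - ζ ^ 3, ζ - ζ ^ 6, ζ ^ 2 - ζ ^ 5]


section MatrixRelations

variable {F : Type*} [Field F]

/-- the matrix `i` over a general field -/
def genI (z : F) : Matrix (Fin 3) (Fin 3) F :=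
  ((2 * z ^ 4 + 2 * z ^ 2 + 2 * z + 1) / 7) •
    !![z - z ^ 6, z ^ 2 - z ^ 5, z ^ 4 - z ^ 3;
       z ^ 2 - z ^ 5, z ^ 4 - z ^ 3, z - z ^ 6;
       z ^ 4 - z ^ 3, z - z ^ 6, z ^ 2 - z ^ 5]

/-- the matrix `g` over a general field -/
def genG (z : F) : Matrix (Fin 3) (Fin 3) F := Matrix.diagonal ![z ^ 4, z ^ 2, z]

/-- the matrix `h` over a general field -/
def genH : Matrix (Fin 3) (Fin 3) F := !![0, 1, 0; 0, 0, 1; 1, 0, 0]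

theorem genH_cube : (genH : Matrix (Fin 3) (Fin 3) F) ^ 3 = 1 := by
  ext a b
  fin_cases a <;> fin_cases b <;>
    simp [genH, pow_succ, Matrix.mul_apply, Fin.sum_univ_three]

theorem genHG (z : F) (hz : z ^ 7 = 1) :
    (genH : Matrix (Fin 3) (Fin 3) F) * genG z = genG z ^ 4 * genH := by
  rw [genG, Matrix.diagonal_pow]
  ext a b
  fin_cases a <;> fin_cases b <;>
    simp [genH, Matrix.mul_apply, Fin.sum_univ_three] <;> grind

theorem genI_sq [CharZero F] (z : F) (hz : z ^ 6 + z ^ 5 + z ^ 4 + z ^ 3 + z ^ 2 + z + 1 = 0) :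
    genI z * genI z = 1 := by
  ext a b
  fin_cases a <;> fin_cases b <;>
    simp [genI, Matrix.mul_apply, Fin.sum_univ_three] <;> grind

theorem genIH (z : F) :
    genI z * genH = genH ^ 2 * genI z := by
  ext a b
  fin_cases a <;> fin_cases b <;>
    simp [genI, genH, pow_succ, Matrix.mul_apply, Fin.sum_univ_three]

theorem genIGI [CharZero F] (z : F) (hz : z ^ 6 + z ^ 5 + z ^ 4 + z ^ 3 + z ^ 2 + z + 1 = 0) :
    genG z * (genI z * genG z * genI z) * genG z = genI z := by
  have hG : genG z = !![z ^ 4, 0, 0; 0, z ^ 2, 0; 0, 0, z] := by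
    ext a b
    fin_cases a <;> fin_cases b <;> simp [genG]
  rw [hG]
  ext a b
  fin_cases a <;> fin_cases b <;>
    simp [genI, Matrix.mul_apply, Fin.sum_univ_three] <;> grind

end MatrixRelations

section GroupTheory

variable {G : Type*} [Group G] {g h i : G}

theorem hg_comm (hg : h * g = g ^ 4 * h) (b a : ℕ) :
    h ^ b * g ^ a = g ^ (4 ^ b * a) * h ^ b := by
  have h1 : SemiconjBy h g (g ^ 4) := hg
  have h2 : ∀ b : ℕ, SemiconjBy (h ^ b) g (g ^ (4 ^ b)) := by
    intro b
    induction b with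
    | zero => simp
    | succ b ih =>
      have := (h1.pow_right (4 ^ b)).mul_left ih
      rw [← pow_mul, ← pow_succ', ← pow_succ'] at this
      exact this
  have := (h2 b).pow_right a
  rwa [← pow_mul] at this

theorem gh_comm (g7 : g ^ 7 = 1) (h3 : h ^ 3 = 1) (hg : h * g = g ^ 4 * h) (a b : ℕ) :
    g ^ a * h ^ b = h ^ b * g ^ (4 ^ (2 * b) * a) := by
  rw [hg_comm hg, ← mul_assoc, ← pow_add]
  congr 1
  rw [← pow_mod_orderOf, ← pow_mod_orderOf (n := 4 ^ _ * a)]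
  congr 1
  have h7 : orderOf g ∣ 7 := orderOf_dvd_of_pow_eq_one g7
  refine Nat.ModEq.of_dvd h7 ?_
  have : b + 2 * b = 3 * b := by ring
  rw [this, pow_mul]
  have h64 : 4 ^ 3 ≡ 1 [MOD 7] := by decide
  simpa using ((h64.pow b).mul_right a).symm

theorem ih_comm (ih : i * h = h ^ 2 * i) (b : ℕ) : i * h ^ b = h ^ (2 * b) * i := by
  have h1 : SemiconjBy i h (h ^ 2) := ih
  have := h1.pow_right b
  rwa [← pow_mul] at this

/-- the big cell -/
def InT (g h i x : G) : Prop := ∃ a b c : ℕ, x = g ^ a * h ^ b * i * g ^ c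

/-- the Borel subgroup -/
def InB (g h x : G) : Prop := ∃ a b : ℕ, x = g ^ a * h ^ b

theorem InB.left_g {x : G} (n : ℕ) (hx : InB g h x) : InB g h (g ^ n * x) := by
  obtain ⟨a, b, rfl⟩ := hx
  exact ⟨n + a, b, by rw [pow_add]; group⟩

theorem InB.left_h (hg : h * g = g ^ 4 * h) {x : G} (n : ℕ) (hx : InB g h x) :
    InB g h (h ^ n * x) := by
  obtain ⟨a, b, rfl⟩ := hx
  exact ⟨4 ^ n * a, n + b, by rw [← mul_assoc, hg_comm hg, pow_add, mul_assoc]⟩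

theorem InB.right_g (hg : h * g = g ^ 4 * h) {x : G} (n : ℕ) (hx : InB g h x) :
    InB g h (x * g ^ n) := by
  obtain ⟨a, b, rfl⟩ := hx
  exact ⟨a + 4 ^ b * n, b, by rw [mul_assoc, hg_comm hg, pow_add, mul_assoc]⟩

theorem InT.left_g {x : G} (n : ℕ) (hx : InT g h i x) : InT g h i (g ^ n * x) := by
  obtain ⟨a, b, c, rfl⟩ := hx
  exact ⟨n + a, b, c, by rw [pow_add]; simp only [mul_assoc]⟩

theorem InT.right_g {x : G} (n : ℕ) (hx : InT g h i x) : InT g h i (x * g ^ n) := by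
  obtain ⟨a, b, c, rfl⟩ := hx
  exact ⟨a, b, c + n, by rw [pow_add]; simp only [mul_assoc]⟩

theorem InT.left_h (hg : h * g = g ^ 4 * h) {x : G} (n : ℕ) (hx : InT g h i x) :
    InT g h i (h ^ n * x) := by
  obtain ⟨a, b, c, rfl⟩ := hx
  refine ⟨4 ^ n * a, n + b, c, ?_⟩
  rw [← mul_assoc, ← mul_assoc, ← mul_assoc, hg_comm hg, pow_add]
  simp only [mul_assoc]

theorem InT.right_h (g7 : g ^ 7 = 1) (h3 : h ^ 3 = 1) (hg : h * g = g ^ 4 * h)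
    (ih : i * h = h ^ 2 * i) {x : G} (n : ℕ) (hx : InT g h i x) :
    InT g h i (x * h ^ n) := by
  obtain ⟨a, b, c, rfl⟩ := hx
  refine ⟨a, b + 2 * n, 4 ^ (2 * n) * c, ?_⟩
  rw [mul_assoc, gh_comm g7 h3 hg c n, mul_assoc, ← mul_assoc i, ih_comm ih, pow_add]
  simp only [mul_assoc]

/-- The relations between the three generators. -/
structure Rels (g h i : G) : Prop where
  g7 : g ^ 7 = 1
  h3 : h ^ 3 = 1
  i2 : i * i = 1
  hg : h * g = g ^ 4 * h
  ih : i * h = h ^ 2 * i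
  igi : g * (i * g * i) * g = i

theorem Rels.four (R : Rels g h i) {m : ℕ} (hm : InT g h i (i * g ^ m * i)) :
    InT g h i (i * g ^ (4 * m) * i) := by
  have key : i * g ^ (4 * m) * i = h ^ 2 * (i * g ^ m * i) * h ^ 1 := by
    have e1 : g ^ (4 * m) = h * g ^ m * h ^ 2 := by
      have := hg_comm R.hg 1 m
      rw [pow_one, pow_one] at this
      rw [this, mul_assoc, ← pow_succ', R.h3, mul_one]
    have e2 : h ^ 2 * i = i * h := R.ih.symm
    have e3 : i * h ^ 1 = h ^ 2 * i := by rw [pow_one, R.ih]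
    calc i * g ^ (4 * m) * i = (i * h) * g ^ m * (h ^ 2 * i) := by
          rw [e1]; simp only [mul_assoc]
      _ = (h ^ 2 * i) * g ^ m * (i * h ^ 1) := by rw [R.ih, e3]
      _ = _ := by simp only [mul_assoc]
  rw [key]
  exact InT.right_h R.g7 R.h3 R.hg R.ih 1 (InT.left_h R.hg 2 hm)

theorem Rels.red (R : Rels g h i) (m : ℕ) : g ^ m = g ^ (m % 7) := by
  conv_lhs => rw [← Nat.mod_add_div m 7, pow_add, pow_mul, R.g7, one_pow, mul_one]

theorem Rels.redh (R : Rels g h i) (m : ℕ) : h ^ m = h ^ (m % 3) := by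
  conv_lhs => rw [← Nat.mod_add_div m 3, pow_add, pow_mul, R.h3, one_pow, mul_one]

theorem Rels.cell (R : Rels g h i) (m : ℕ) (hm : m % 7 ≠ 0) :
    InT g h i (i * g ^ m * i) := by
  have ginv : g⁻¹ = g ^ 6 := by
    rw [inv_eq_iff_mul_eq_one, ← pow_succ']; exact R.g7
  have iinv : i⁻¹ = i := by
    rw [inv_eq_iff_mul_eq_one]; exact R.i2
  have e1 : i * g * i = g⁻¹ * i * g⁻¹ := by
    have := R.igi
    rw [eq_mul_inv_iff_mul_eq, eq_inv_mul_iff_mul_eq, ← mul_assoc]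
    exact this
  have h1 : InT g h i (i * g ^ 1 * i) := by
    refine ⟨6, 0, 6, ?_⟩
    rw [pow_one, e1, ginv, pow_zero, mul_one]
  have h6 : InT g h i (i * g ^ 6 * i) := by
    refine ⟨1, 0, 1, ?_⟩
    have := congrArg (·⁻¹) e1
    simp only [mul_inv_rev, inv_inv, iinv] at this
    rw [ginv] at this
    rw [pow_zero, pow_one, mul_one, mul_assoc, this, mul_assoc]
  have h4 := R.four h1
  have h2 := R.four h4
  have h3 := R.four h6
  have h5 := R.four h3
  rw [R.red] at h4 h2 h3 h5
  rw [R.red]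
  have : m % 7 < 7 := Nat.mod_lt _ (by norm_num)
  generalize m % 7 = r at *
  interval_cases r
  · exact absurd rfl hm
  · exact h1
  · exact h2
  · exact h3
  · exact h4
  · exact h5
  · exact h6

theorem Rels.eq_one {x : G} (h7 : x ^ 7 = 1) (h3 : x ^ 3 = 1) : x = 1 := by
  have : x ^ 7 = (x ^ 3) ^ 2 * x := by group
  rw [h7, h3] at this
  simpa using this.symm

theorem Rels.not_mem (R : Rels g h i) (hh : h ≠ 1) : ¬ InB g h i := by
  rintro ⟨a, b, hi⟩
  have e := R.ih
  have e2 : g ^ a * h = h ^ 2 * g ^ a := by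
    rw [hi, mul_assoc, ← pow_succ, pow_succ', ← mul_assoc, ← mul_assoc] at e
    exact mul_right_cancel e
  have e3 := gh_comm R.g7 R.h3 R.hg a 1
  rw [pow_one, e2, sq, mul_assoc] at e3
  have e4 := mul_left_cancel e3
  rw [show 4 ^ (2 * 1) * a = 7 * (2 * a) + a + a by ring, pow_add, pow_add, pow_mul, R.g7,
    one_pow, one_mul] at e4
  have e5 := mul_right_cancel e4
  apply hh
  apply Rels.eq_one _ R.h3
  rw [e5, ← pow_mul, mul_comm, pow_mul, R.g7, one_pow]

/-- The parametrisation by the Bruhat cells. -/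
def param (g h i : G) : (Fin 7 × Fin 3) ⊕ (Fin 7 × Fin 3 × Fin 7) → G
  | .inl (a, b) => g ^ (a : ℕ) * h ^ (b : ℕ)
  | .inr (a, b, c) => g ^ (a : ℕ) * h ^ (b : ℕ) * i * g ^ (c : ℕ)

theorem Rels.range (R : Rels g h i) (x : G) :
    x ∈ Set.range (param g h i) ↔ InB g h x ∨ InT g h i x := by
  constructor
  · rintro ⟨⟨a, b⟩ | ⟨a, b, c⟩, rfl⟩
    · exact Or.inl ⟨a, b, rfl⟩
    · exact Or.inr ⟨a, b, c, rfl⟩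
  · rintro (⟨a, b, rfl⟩ | ⟨a, b, c, rfl⟩)
    · refine ⟨.inl (⟨a % 7, Nat.mod_lt _ (by norm_num)⟩, ⟨b % 3, Nat.mod_lt _ (by norm_num)⟩), ?_⟩
      simp only [param]
      rw [← R.red, ← R.redh]
    · refine ⟨.inr (⟨a % 7, Nat.mod_lt _ (by norm_num)⟩, ⟨b % 3, Nat.mod_lt _ (by norm_num)⟩,
        ⟨c % 7, Nat.mod_lt _ (by norm_num)⟩), ?_⟩
      simp only [param]
      rw [← R.red, ← R.redh, ← R.red]

theorem Rels.inj_B (R : Rels g h i) (hg1 : g ≠ 1) (hh : h ≠ 1) {a a' : Fin 7} {b b' : Fin 3}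
    (e : g ^ (a : ℕ) * h ^ (b : ℕ) = g ^ (a' : ℕ) * h ^ (b' : ℕ)) : a = a' ∧ b = b' := by
  have og : orderOf g = 7 :=
    haveI : Fact (Nat.Prime 7) := ⟨by norm_num⟩
    orderOf_eq_prime R.g7 hg1
  have oh : orderOf h = 3 :=
    haveI : Fact (Nat.Prime 3) := ⟨by norm_num⟩
    orderOf_eq_prime R.h3 hh
  have e1 : (g ^ (a' : ℕ))⁻¹ * g ^ (a : ℕ) = h ^ (b' : ℕ) * (h ^ (b : ℕ))⁻¹ := by
    rw [eq_mul_inv_iff_mul_eq, mul_assoc, e, inv_mul_cancel_left]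
  have u7 : ((g ^ (a' : ℕ))⁻¹ * g ^ (a : ℕ)) ^ 7 = 1 := by
    rw [((Commute.refl g).pow_pow _ _).inv_left.mul_pow, inv_pow, ← pow_mul, ← pow_mul,
      mul_comm _ 7, mul_comm _ 7, pow_mul, pow_mul, R.g7]; simp
  have u3 : ((g ^ (a' : ℕ))⁻¹ * g ^ (a : ℕ)) ^ 3 = 1 := by
    rw [e1, ((Commute.refl h).pow_pow _ _).inv_right.mul_pow, inv_pow, ← pow_mul, ← pow_mul,
      mul_comm _ 3, mul_comm _ 3, pow_mul, pow_mul, R.h3]; simp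
  have u1 := Rels.eq_one u7 u3
  have ea : g ^ (a' : ℕ) = g ^ (a : ℕ) := inv_mul_eq_one.mp u1
  rw [e1] at u1
  have eb : h ^ (b' : ℕ) = h ^ (b : ℕ) := mul_inv_eq_one.mp u1
  rw [pow_inj_mod, og] at ea
  rw [pow_inj_mod, oh] at eb
  constructor <;> ext <;> omega

theorem InB.inv (R : Rels g h i) {x : G} (hx : InB g h x) : InB g h x⁻¹ := by
  obtain ⟨a, b, rfl⟩ := hx
  have e1 : (g ^ a)⁻¹ = g ^ (6 * a) := by
    rw [inv_eq_iff_mul_eq_one, ← pow_add, show a + 6 * a = 7 * a by ring, pow_mul, R.g7, one_pow]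
  have e2 : (h ^ b)⁻¹ = h ^ (2 * b) := by
    rw [inv_eq_iff_mul_eq_one, ← pow_add, show b + 2 * b = 3 * b by ring, pow_mul, R.h3, one_pow]
  rw [mul_inv_rev, e1, e2]
  exact InB.left_h R.hg _ ⟨6 * a, 0, by simp⟩

theorem InB.mul (R : Rels g h i) {x y : G} (hx : InB g h x) (hy : InB g h y) :
    InB g h (x * y) := by
  obtain ⟨a, b, rfl⟩ := hx
  rw [mul_assoc]
  exact InB.left_g _ (InB.left_h R.hg _ hy)

theorem Rels.T_not_B (R : Rels g h i) (hh : h ≠ 1) {x : G} (hx : InT g h i x)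
    (hx' : InB g h x) : False := by
  obtain ⟨a, b, c, rfl⟩ := hx
  apply R.not_mem hh
  have h1 : InB g h (g ^ a * h ^ b) := ⟨a, b, rfl⟩
  have h2 : InB g h (g ^ c) := ⟨c, 0, by simp⟩
  have := ((h1.inv R).mul R hx').mul R (h2.inv R)
  convert this using 1
  group

theorem Rels.inj (R : Rels g h i) (hg1 : g ≠ 1) (hh : h ≠ 1) :
    Function.Injective (param g h i) := by
  rintro (⟨a, b⟩ | ⟨a, b, c⟩) (⟨a', b'⟩ | ⟨a', b', c'⟩) e
  · obtain ⟨rfl, rfl⟩ := R.inj_B hg1 hh e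
    rfl
  · exact (R.T_not_B hh ⟨_, _, _, e⟩ ⟨a, b, rfl⟩).elim
  · exact (R.T_not_B hh ⟨_, _, _, e.symm⟩ ⟨a', b', rfl⟩).elim
  · simp only [param] at e
    have hc : c = c' := by
      by_contra hne
      have h1 : InB g h (g ^ (a : ℕ) * h ^ (b : ℕ)) := ⟨a, b, rfl⟩
      have h2 : InB g h (g ^ (a' : ℕ) * h ^ (b' : ℕ)) := ⟨a', b', rfl⟩
      refine R.T_not_B hh (R.cell ((c : ℕ) + 6 * c') ?_) (x := i * g ^ ((c : ℕ) + 6 * c') * i) ?_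
      · intro h0
        apply hne
        ext
        omega
      · convert (h1.inv R).mul R h2 using 1
        rw [eq_inv_mul_iff_mul_eq, pow_add, ← mul_assoc, ← mul_assoc, ← mul_assoc, e,
          mul_assoc (_ * i), ← pow_add, show (c' : ℕ) + 6 * c' = 7 * c' by ring, pow_mul, R.g7,
          one_pow, mul_one, mul_assoc _ i, R.i2, mul_one]
    subst hc
    have e' := mul_right_cancel (mul_right_cancel e)
    obtain ⟨rfl, rfl⟩ := R.inj_B hg1 hh e'
    rfl

theorem Rels.left_i (R : Rels g h i) {x : G} (hx : InB g h x ∨ InT g h i x) :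
    InB g h (i * x) ∨ InT g h i (i * x) := by
  obtain ⟨a, b, rfl⟩ | ⟨a, b, c, rfl⟩ := hx
  · right
    rw [gh_comm R.g7 R.h3 R.hg, ← mul_assoc, ih_comm R.ih]
    exact ⟨0, 2 * b, 4 ^ (2 * b) * a, by rw [pow_zero, one_mul]⟩
  · rw [gh_comm R.g7 R.h3 R.hg]
    generalize 4 ^ (2 * b) * a = m
    have e : i * (h ^ b * g ^ m * i * g ^ c) = h ^ (2 * b) * ((i * g ^ m * i) * g ^ c) := by
      rw [← mul_assoc, ← mul_assoc, ← mul_assoc, ih_comm R.ih]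
      simp only [mul_assoc]
    rw [e]
    by_cases hm : m % 7 = 0
    · left
      rw [R.red m, hm, pow_zero, mul_one, R.i2, one_mul]
      exact InB.left_h R.hg _ ⟨c, 0, by simp⟩
    · right
      exact InT.left_h R.hg _ (InT.right_g _ (R.cell m hm))

theorem Rels.closure_eq (R : Rels g h i) :
    ((Subgroup.closure {g, h, i} : Subgroup G) : Set G) = Set.range (param g h i) := by
  ext x
  rw [R.range]
  constructor
  · intro hx
    have iinv : i⁻¹ = i := by
      rw [inv_eq_iff_mul_eq_one]; exact R.i2
    have ginv : g⁻¹ = g ^ 6 := by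
      rw [inv_eq_iff_mul_eq_one, ← pow_succ']; exact R.g7
    have hinv : h⁻¹ = h ^ 2 := by
      rw [inv_eq_iff_mul_eq_one, ← pow_succ']; exact R.h3
    have lg : ∀ (n : ℕ) (y : G), (InB g h y ∨ InT g h i y) →
        (InB g h (g ^ n * y) ∨ InT g h i (g ^ n * y)) := fun n y hy =>
      hy.imp (InB.left_g n) (InT.left_g n)
    have lh : ∀ (n : ℕ) (y : G), (InB g h y ∨ InT g h i y) →
        (InB g h (h ^ n * y) ∨ InT g h i (h ^ n * y)) := fun n y hy =>
      hy.imp (InB.left_h R.hg n) (InT.left_h R.hg n)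
    induction hx using Subgroup.closure_induction_left with
    | one => exact Or.inl ⟨0, 0, by simp⟩
    | mul_left x hx y hy ih =>
      rcases hx with rfl | rfl | rfl
      · simpa using lg 1 y ih
      · simpa using lh 1 y ih
      · exact R.left_i ih
    | inv_mul_cancel x hx y hy ih =>
      rcases hx with rfl | rfl | rfl
      · rw [ginv]; exact lg 6 y ih
      · rw [hinv]; exact lh 2 y ih
      · rw [iinv]; exact R.left_i ih
  · have mg : g ∈ Subgroup.closure {g, h, i} := Subgroup.subset_closure (by simp)
    have mh : h ∈ Subgroup.closure {g, h, i} := Subgroup.subset_closure (by simp)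
    have mi : i ∈ Subgroup.closure {g, h, i} := Subgroup.subset_closure (by simp)
    rintro (⟨a, b, rfl⟩ | ⟨a, b, c, rfl⟩)
    · exact mul_mem (pow_mem mg _) (pow_mem mh _)
    · exact mul_mem (mul_mem (mul_mem (pow_mem mg _) (pow_mem mh _)) mi) (pow_mem mg _)

theorem Rels.card (R : Rels g h i) (hg1 : g ≠ 1) (hh : h ≠ 1) :
    Nat.card (Subgroup.closure {g, h, i} : Subgroup G) = 168 := by
  have e1 : Nat.card (Subgroup.closure {g, h, i} : Subgroup G)
      = Nat.card (Set.range (param g h i)) := by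
    rw [← R.closure_eq]; rfl
  rw [e1, Nat.card_range_of_injective (R.inj hg1 hh)]
  simp

end GroupTheory

/-- The subgroup of `GL₃(K)` generated by `g`, `h`, and `i` has exactly
168 elements. -/
theorem stmt12 (ζ : K7) (hζ : IsPrimitiveRoot ζ 7)
    (gU hU iU : GL (Fin 3) K7)
    (hg : (gU : Matrix (Fin 3) (Fin 3) K7) = matG ζ)
    (hh : (hU : Matrix (Fin 3) (Fin 3) K7) = matH)
    (hi : (iU : Matrix (Fin 3) (Fin 3) K7) = matI ζ) :
    Nat.card (Subgroup.closure {gU, hU, iU} : Subgroup (GL (Fin 3) K7)) = 168 := by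
  have hg' : (gU : Matrix (Fin 3) (Fin 3) K7) = genG ζ := hg
  have hh' : (hU : Matrix (Fin 3) (Fin 3) K7) = genH := hh
  have hi' : (iU : Matrix (Fin 3) (Fin 3) K7) = genI ζ := hi
  have z7 : ζ ^ 7 = 1 := hζ.pow_eq_one
  have z1 : ζ ≠ 1 := hζ.ne_one (by norm_num)
  have hz : ζ ^ 6 + ζ ^ 5 + ζ ^ 4 + ζ ^ 3 + ζ ^ 2 + ζ + 1 = 0 := by
    have := hζ.geom_sum_eq_zero (by norm_num)
    simp only [Finset.sum_range_succ, Finset.sum_range_zero] at this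
    linear_combination this
  refine Rels.card ⟨?_, ?_, ?_, ?_, ?_, ?_⟩ ?_ ?_
  · apply Units.ext
    rw [Units.val_pow_eq_pow_val, hg', genG, Matrix.diagonal_pow, Units.val_one,
      ← Matrix.diagonal_one]
    congr 1
    ext k
    fin_cases k
    · change (ζ ^ 4) ^ 7 = 1
      rw [← pow_mul, mul_comm, pow_mul, z7, one_pow]
    · change (ζ ^ 2) ^ 7 = 1
      rw [← pow_mul, mul_comm, pow_mul, z7, one_pow]
    · exact z7
  · apply Units.ext
    rw [Units.val_pow_eq_pow_val, hh', genH_cube, Units.val_one]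
  · apply Units.ext
    rw [Units.val_mul, hi', genI_sq ζ hz, Units.val_one]
  · apply Units.ext
    rw [Units.val_mul, Units.val_mul, Units.val_pow_eq_pow_val, hh', hg', genHG ζ z7]
  · apply Units.ext
    rw [Units.val_mul, Units.val_mul, Units.val_pow_eq_pow_val, hh', hi', genIH ζ]
  · apply Units.ext
    simp only [Units.val_mul]
    rw [hg', hi', genIGI ζ hz]
  · rintro rfl
    have := congrFun (congrFun hg' 2) 2
    simp [genG] at this
    exact z1 this.symm
  · rintro rfl
    have := congrFun (congrFun hh' 0) 0
    simp [genH] at this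
end

section
/- Let K = ℚ(ζ) be the 7th cyclotomic field with ζ a primitive 7th root of unity. Let g = diag(ζ^4, ζ^2, ζ), let h be the permutation matrix with rows (0,1,0), (0,0,1), (1,0,0), and let i = ((2ζ^4 + 2ζ^2 + 2ζ + 1)/7) · [[ζ-ζ^6, ζ^2-ζ^5, ζ^4-ζ^3],[ζ^2-ζ^5, ζ^4-ζ^3, ζ-ζ^6],[ζ^4-ζ^3, ζ-ζ^6, ζ^2-ζ^5]], all viewed as elements of GL_3(K). Then the subgroup of GL_3(K) generated by g, h, and i is a simple group. -/
open scoped MatrixGroups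

/-- the minimal relation -/
theorem aux_phi (ζ : K7) (hζ : IsPrimitiveRoot ζ 7) :
    ζ ^ 6 + ζ ^ 5 + ζ ^ 4 + ζ ^ 3 + ζ ^ 2 + ζ + 1 = 0 := by
  have h := hζ.geom_sum_eq_zero (by norm_num)
  simp only [Finset.sum_range_succ, Finset.sum_range_zero] at h
  linear_combination h

theorem aux_ii (ζ : K7)
    (hΦ : ζ ^ 6 + ζ ^ 5 + ζ ^ 4 + ζ ^ 3 + ζ ^ 2 + ζ + 1 = 0) :
    matI ζ * matI ζ = 1 := by
  ext a b
  fin_cases a <;> fin_cases b <;>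
    simp [matI, Matrix.mul_apply, Fin.sum_univ_three]
  · linear_combination ((-1)*ζ^0 + (1)*ζ^1 + (1/49)*ζ^2 + (3/49)*ζ^3 + (5/49)*ζ^4 + (3/49)*ζ^5 + (5/49)*ζ^6 + (-52/49)*ζ^7 + (36/49)*ζ^8 + (-4/7)*ζ^9 + (12/49)*ζ^10 + (-4/49)*ζ^11 + (12/49)*ζ^12 + (-4/49)*ζ^13 + (4/49)*ζ^14) * hΦ
  · linear_combination ((1/49)*ζ^3 + (2/49)*ζ^4 + (1/49)*ζ^5 + (-4/49)*ζ^6 + (-8/49)*ζ^10 + (12/49)*ζ^11 + (-8/49)*ζ^12 + (4/49)*ζ^13) * hΦ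
  · linear_combination ((1/49)*ζ^3 + (2/49)*ζ^4 + (1/49)*ζ^5 + (-4/49)*ζ^6 + (-8/49)*ζ^10 + (12/49)*ζ^11 + (-8/49)*ζ^12 + (4/49)*ζ^13) * hΦ
  · linear_combination ((1/49)*ζ^3 + (2/49)*ζ^4 + (1/49)*ζ^5 + (-4/49)*ζ^6 + (-8/49)*ζ^10 + (12/49)*ζ^11 + (-8/49)*ζ^12 + (4/49)*ζ^13) * hΦ
  · linear_combination ((-1)*ζ^0 + (1)*ζ^1 + (1/49)*ζ^2 + (3/49)*ζ^3 + (5/49)*ζ^4 + (3/49)*ζ^5 + (5/49)*ζ^6 + (-52/49)*ζ^7 + (36/49)*ζ^8 + (-4/7)*ζ^9 + (12/49)*ζ^10 + (-4/49)*ζ^11 + (12/49)*ζ^12 + (-4/49)*ζ^13 + (4/49)*ζ^14) * hΦ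
  · linear_combination ((1/49)*ζ^3 + (2/49)*ζ^4 + (1/49)*ζ^5 + (-4/49)*ζ^6 + (-8/49)*ζ^10 + (12/49)*ζ^11 + (-8/49)*ζ^12 + (4/49)*ζ^13) * hΦ
  · linear_combination ((1/49)*ζ^3 + (2/49)*ζ^4 + (1/49)*ζ^5 + (-4/49)*ζ^6 + (-8/49)*ζ^10 + (12/49)*ζ^11 + (-8/49)*ζ^12 + (4/49)*ζ^13) * hΦ
  · linear_combination ((1/49)*ζ^3 + (2/49)*ζ^4 + (1/49)*ζ^5 + (-4/49)*ζ^6 + (-8/49)*ζ^10 + (12/49)*ζ^11 + (-8/49)*ζ^12 + (4/49)*ζ^13) * hΦ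
  · linear_combination ((-1)*ζ^0 + (1)*ζ^1 + (1/49)*ζ^2 + (3/49)*ζ^3 + (5/49)*ζ^4 + (3/49)*ζ^5 + (5/49)*ζ^6 + (-52/49)*ζ^7 + (36/49)*ζ^8 + (-4/7)*ζ^9 + (12/49)*ζ^10 + (-4/49)*ζ^11 + (12/49)*ζ^12 + (-4/49)*ζ^13 + (4/49)*ζ^14) * hΦ

theorem matG_eq (ζ : K7) : matG ζ = !![ζ ^ 4, 0, 0; 0, ζ ^ 2, 0; 0, 0, ζ] := by
  ext a b
  fin_cases a <;> fin_cases b <;> simp [matG]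

theorem aux_gigig (ζ : K7)
    (hΦ : ζ ^ 6 + ζ ^ 5 + ζ ^ 4 + ζ ^ 3 + ζ ^ 2 + ζ + 1 = 0) :
    matG ζ * (matI ζ * matG ζ * matI ζ) * matG ζ = matI ζ := by
  rw [matG_eq]
  generalize hs : (2 * ζ ^ 4 + 2 * ζ ^ 2 + 2 * ζ + 1) / 7 = s
  ext a b
  fin_cases a <;> fin_cases b <;>
    simp [matI, hs, Matrix.mul_apply, Fin.sum_univ_three] <;> rw [← hs]
  · linear_combination ((-1/7)*ζ^1 + (-1/7)*ζ^2 + (2/7)*ζ^4 + (-2/7)*ζ^5 + (3/7)*ζ^6 + (1/7)*ζ^7 + (-1/7)*ζ^8 + (-3/7)*ζ^9 + (2/7)*ζ^10 + (-2/7)*ζ^12 + (3/7)*ζ^13 + (9/49)*ζ^14 + (-12/49)*ζ^16 + (11/49)*ζ^17 + (-11/49)*ζ^18 + (-20/49)*ζ^19 + (16/49)*ζ^20 + (-12/49)*ζ^21 + (4/49)*ζ^22 + (8/49)*ζ^24 + (-4/49)*ζ^25 + (4/49)*ζ^26) * hΦ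
  · linear_combination ((-1/7)*ζ^2 + (-1/7)*ζ^3 + (3/7)*ζ^5 + (-1/7)*ζ^6 + (2/7)*ζ^7 + (-2/7)*ζ^8 + (1/7)*ζ^9 + (-3/7)*ζ^10 + (-1/49)*ζ^11 + (19/49)*ζ^12 + (-8/49)*ζ^13 + (19/49)*ζ^14 + (-11/49)*ζ^15 + (12/49)*ζ^16 + (-20/49)*ζ^17 + (4/49)*ζ^18 + (-4/49)*ζ^19 + (-4/49)*ζ^20 + (8/49)*ζ^21 + (-4/49)*ζ^22 + (4/49)*ζ^23) * hΦ
  · linear_combination ((1/7)*ζ^3 + (-1/7)*ζ^5 + (-2/7)*ζ^6 + (4/7)*ζ^7 + (-4/7)*ζ^8 + (2/7)*ζ^9 + (8/49)*ζ^10 + (2/49)*ζ^11 + (-5/49)*ζ^12 + (-17/49)*ζ^13 + (4/7)*ζ^14 + (-32/49)*ζ^15 + (16/49)*ζ^16 + (-8/49)*ζ^17 + (16/49)*ζ^18 + (-16/49)*ζ^19 + (12/49)*ζ^20 + (-4/49)*ζ^21) * hΦ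
  · linear_combination ((-1/7)*ζ^2 + (-1/7)*ζ^3 + (3/7)*ζ^5 + (-1/7)*ζ^6 + (2/7)*ζ^7 + (-2/7)*ζ^8 + (1/7)*ζ^9 + (-3/7)*ζ^10 + (-1/49)*ζ^11 + (19/49)*ζ^12 + (-8/49)*ζ^13 + (19/49)*ζ^14 + (-11/49)*ζ^15 + (12/49)*ζ^16 + (-20/49)*ζ^17 + (4/49)*ζ^18 + (-4/49)*ζ^19 + (-4/49)*ζ^20 + (8/49)*ζ^21 + (-4/49)*ζ^22 + (4/49)*ζ^23) * hΦ
  · linear_combination ((1/7)*ζ^3 + (-1/7)*ζ^5 + (-2/7)*ζ^6 + (29/49)*ζ^7 + (-25/49)*ζ^8 + (18/49)*ζ^9 + (1/7)*ζ^10 + (-1/7)*ζ^12 + (-16/49)*ζ^13 + (16/49)*ζ^14 + (-4/7)*ζ^15 + (12/49)*ζ^16 + (4/49)*ζ^18 + (4/49)*ζ^20) * hΦ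
  · linear_combination ((-1/7)*ζ^1 + (-1/7)*ζ^2 + (2/7)*ζ^4 + (-2/7)*ζ^5 + (3/7)*ζ^6 + (8/49)*ζ^7 + (-4/49)*ζ^8 + (-18/49)*ζ^9 + (11/49)*ζ^10 + (-4/49)*ζ^11 + (-16/49)*ζ^12 + (16/49)*ζ^13 + (-4/49)*ζ^14 + (8/49)*ζ^15 + (-8/49)*ζ^16 + (8/49)*ζ^17 + (-4/49)*ζ^18) * hΦ
  · linear_combination ((1/7)*ζ^3 + (-1/7)*ζ^5 + (-2/7)*ζ^6 + (4/7)*ζ^7 + (-4/7)*ζ^8 + (2/7)*ζ^9 + (8/49)*ζ^10 + (2/49)*ζ^11 + (-5/49)*ζ^12 + (-17/49)*ζ^13 + (4/7)*ζ^14 + (-32/49)*ζ^15 + (16/49)*ζ^16 + (-8/49)*ζ^17 + (16/49)*ζ^18 + (-16/49)*ζ^19 + (12/49)*ζ^20 + (-4/49)*ζ^21) * hΦ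
  · linear_combination ((-1/7)*ζ^1 + (-1/7)*ζ^2 + (2/7)*ζ^4 + (-2/7)*ζ^5 + (3/7)*ζ^6 + (8/49)*ζ^7 + (-4/49)*ζ^8 + (-18/49)*ζ^9 + (11/49)*ζ^10 + (-4/49)*ζ^11 + (-16/49)*ζ^12 + (16/49)*ζ^13 + (-4/49)*ζ^14 + (8/49)*ζ^15 + (-8/49)*ζ^16 + (8/49)*ζ^17 + (-4/49)*ζ^18) * hΦ
  · linear_combination ((-1/7)*ζ^2 + (-1/7)*ζ^3 + (3/7)*ζ^5 + (-6/49)*ζ^6 + (18/49)*ζ^7 + (-1/7)*ζ^8 + (11/49)*ζ^9 + (-23/49)*ζ^10 + (-8/49)*ζ^11 + (8/49)*ζ^12 + (-20/49)*ζ^13 + (16/49)*ζ^14 + (-8/49)*ζ^15 + (12/49)*ζ^16 + (-4/49)*ζ^17 + (4/49)*ζ^18) * hΦ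

theorem aux_hg (ζ : K7) (h7 : ζ ^ 7 = 1) :
    matH * matG ζ = matG ζ ^ 4 * matH := by
  rw [matG, Matrix.diagonal_pow]
  ext a b
  fin_cases a <;> fin_cases b <;>
    simp [matH, Matrix.mul_apply, Fin.sum_univ_three, Matrix.diagonal]
  · linear_combination (-ζ^9 - ζ^2) * h7
  · linear_combination (-ζ) * h7

theorem aux_g7 (ζ : K7) (h7 : ζ ^ 7 = 1) : matG ζ ^ 7 = 1 := by
  rw [matG, Matrix.diagonal_pow]
  ext a b
  fin_cases a <;> fin_cases b <;>
    simp [Matrix.diagonal, h7, ← pow_mul]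
  · rw [pow_mul ζ 7 4, h7, one_pow]
  · rw [pow_mul ζ 7 2, h7, one_pow]

theorem aux_h3 : matH ^ 3 = 1 := by
  ext a b
  fin_cases a <;> fin_cases b <;>
    simp [pow_succ, matH, Matrix.mul_apply, Fin.sum_univ_three]

theorem aux_ih (ζ : K7) : matI ζ * matH = matH ^ 2 * matI ζ := by
  ext a b
  fin_cases a <;> fin_cases b <;>
    simp [pow_succ, matI, matH, Matrix.mul_apply, Fin.sum_univ_three]

section Abstract

variable {G : Type*} [Group G]

/-- big cell -/
def bigCell (g h i : G) : Set G := {x | ∃ a b d : ℕ, x = g ^ a * h ^ b * i * g ^ d}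

theorem h_pow_mul {g h : G} (hg : h * g = g ^ 4 * h) (n : ℕ) :
    h * g ^ n = g ^ (4 * n) * h := by
  have h1 : SemiconjBy h g (g ^ 4) := hg
  have h2 := (h1.pow_right n).eq
  rwa [← pow_mul] at h2

theorem hpow_gpow {g h : G} (hg : h * g = g ^ 4 * h) (b n : ℕ) :
    h ^ b * g ^ n = g ^ (4 ^ b * n) * h ^ b := by
  induction b generalizing n with
  | zero => simp
  | succ b ih =>
    rw [pow_succ, mul_assoc, h_pow_mul hg, ← mul_assoc, ih, mul_assoc]
    congr 2
    ring

theorem gpow_h {g h : G} (g7 : g ^ 7 = 1) (hg : h * g = g ^ 4 * h) (n : ℕ) :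
    g ^ n * h = h * g ^ (2 * n) := by
  rw [h_pow_mul hg]
  have : g ^ (4 * (2 * n)) = g ^ n := by
    rw [show 4 * (2 * n) = 7 * n + n by ring, pow_add, pow_mul, g7, one_pow, one_mul]
  rw [this]

theorem bc_left {g h i : G} (hg : h * g = g ^ 4 * h) {x : G} (hx : x ∈ bigCell g h i)
    (a b : ℕ) : g ^ a * h ^ b * x ∈ bigCell g h i := by
  obtain ⟨a', b', d, rfl⟩ := hx
  refine ⟨a + 4 ^ b * a', b + b', d, ?_⟩
  have := hpow_gpow hg b a'
  calc g ^ a * h ^ b * (g ^ a' * h ^ b' * i * g ^ d)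
      = g ^ a * (h ^ b * g ^ a') * h ^ b' * i * g ^ d := by simp only [mul_assoc]
    _ = _ := by rw [this, pow_add, pow_add]; simp only [mul_assoc]

theorem bc_right_h {g h i : G} (g7 : g ^ 7 = 1) (hg : h * g = g ^ 4 * h)
    (ih : i * h = h ^ 2 * i) {x : G} (hx : x ∈ bigCell g h i) :
    x * h ∈ bigCell g h i := by
  obtain ⟨a, b, d, rfl⟩ := hx
  refine ⟨a, b + 2, 2 * d, ?_⟩
  calc g ^ a * h ^ b * i * g ^ d * h = g ^ a * h ^ b * i * (g ^ d * h) := by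
        simp only [mul_assoc]
    _ = g ^ a * h ^ b * (i * h) * g ^ (2 * d) := by
        rw [gpow_h g7 hg]; simp only [mul_assoc]
    _ = _ := by rw [ih, pow_add]; simp only [mul_assoc]

theorem igi_mem {g h i : G} (g7 : g ^ 7 = 1) (h3 : h ^ 3 = 1) (i2 : i * i = 1)
    (hg : h * g = g ^ 4 * h) (ih : i * h = h ^ 2 * i) (rel : g * (i * g * i) * g = i)
    (n : ℕ) (hn : n % 7 ≠ 0) : i * g ^ n * i ∈ bigCell g h i := by
  have hred : g ^ n = g ^ (n % 7) := by
    conv_lhs => rw [← Nat.mod_add_div n 7, pow_add, pow_mul, g7, one_pow, mul_one]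
  rw [hred]
  have hlt : n % 7 < 7 := Nat.mod_lt _ (by norm_num)
  generalize n % 7 = m at *
  have red (k : ℕ) : g ^ (k + 7) = g ^ k := by rw [pow_add, g7, mul_one]
  have g6 : g ^ 6 = g⁻¹ := by
    rw [eq_inv_iff_mul_eq_one, ← pow_succ]; exact g7
  have ii : i⁻¹ = i := inv_eq_of_mul_eq_one_left i2
  have step (k : ℕ) (hk : i * g ^ k * i ∈ bigCell g h i) :
      i * g ^ (4 * k) * i ∈ bigCell g h i := by
    have h1 := bc_right_h g7 hg ih (bc_left hg hk 0 2)
    convert h1 using 1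
    have e1 : h * (i * h) = i := by
      rw [ih, ← mul_assoc, ← pow_succ', h3, one_mul]
    have e2 : i * h * g ^ k * i * h = i * g ^ (4 * k) * (h * (i * h)) := by
      rw [mul_assoc i h, h_pow_mul hg]; simp only [mul_assoc]
    rw [e1] at e2
    rw [← e2, ih]; simp only [pow_zero, one_mul, mul_assoc]
  have r1 : i * g ^ 1 * i ∈ bigCell g h i := by
    refine ⟨6, 0, 6, ?_⟩
    rw [g6, pow_one, pow_zero, mul_one]
    nth_rewrite 3 [← rel]
    group
  have r6 : i * g ^ 6 * i ∈ bigCell g h i := by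
    refine ⟨1, 0, 1, ?_⟩
    have h1 : i⁻¹ = (g * (i * g * i) * g)⁻¹ := by rw [rel]
    simp only [mul_inv_rev, ii] at h1
    rw [g6]
    simp only [pow_one, pow_zero, mul_one]
    conv_rhs => rw [h1]
    group
  have r4 := step 1 r1
  have r2 := step 4 r4
  have r3 := step 6 r6
  have r5 := step 3 (by simpa [show 4 * 6 = 3 + 7 + 7 + 7 by norm_num, red] using r3)
  interval_cases m
  · exact absurd rfl hn
  · exact r1
  · simpa [show 4 * 4 = 2 + 7 + 7 by norm_num, red] using r2
  · simpa [show 4 * 6 = 3 + 7 + 7 + 7 by norm_num, red] using r3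
  · simpa using r4
  · simpa [show 4 * 3 = 5 + 7 by norm_num, red] using r5
  · exact r6

/-- Bruhat-type decomposition. -/
theorem bruhat {g h i : G} (g7 : g ^ 7 = 1) (h3 : h ^ 3 = 1) (i2 : i * i = 1)
    (hg : h * g = g ^ 4 * h) (ih : i * h = h ^ 2 * i) (rel : g * (i * g * i) * g = i)
    (x : G) (hx : x ∈ Subgroup.closure {g, h, i}) :
    (∃ a b : ℕ, x = g ^ a * h ^ b) ∨ x ∈ bigCell g h i := by
  have mg (x : G) (H : (∃ a b : ℕ, x = g ^ a * h ^ b) ∨ x ∈ bigCell g h i) :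
      (∃ a b : ℕ, x * g = g ^ a * h ^ b) ∨ x * g ∈ bigCell g h i := by
    rcases H with ⟨a, b, rfl⟩ | ⟨a, b, d, rfl⟩
    · left
      refine ⟨a + 4 ^ b * 1, b, ?_⟩
      have := hpow_gpow hg b 1
      rw [pow_add, mul_assoc, mul_assoc, ← this, pow_one]
    · right
      exact ⟨a, b, d + 1, by rw [pow_succ]; simp only [mul_assoc]⟩
  have mh (x : G) (H : (∃ a b : ℕ, x = g ^ a * h ^ b) ∨ x ∈ bigCell g h i) :
      (∃ a b : ℕ, x * h = g ^ a * h ^ b) ∨ x * h ∈ bigCell g h i := by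
    rcases H with ⟨a, b, rfl⟩ | H
    · left
      exact ⟨a, b + 1, by rw [pow_succ]; simp only [mul_assoc]⟩
    · right
      exact bc_right_h g7 hg ih H
  have mi (x : G) (H : (∃ a b : ℕ, x = g ^ a * h ^ b) ∨ x ∈ bigCell g h i) :
      (∃ a b : ℕ, x * i = g ^ a * h ^ b) ∨ x * i ∈ bigCell g h i := by
    rcases H with ⟨a, b, rfl⟩ | ⟨a, b, d, rfl⟩
    · right
      exact ⟨a, b, 0, by simp⟩
    · by_cases hd : d % 7 = 0
      · left
        refine ⟨a, b, ?_⟩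
        have : g ^ d = 1 := by
          rw [← Nat.mod_add_div d 7, pow_add, pow_mul, g7, one_pow, mul_one, hd, pow_zero]
        rw [this, mul_one, mul_assoc, i2, mul_one]
      · right
        have := bc_left hg (igi_mem g7 h3 i2 hg ih rel d hd) a b
        simpa only [mul_assoc] using this
  have g6 : g⁻¹ = g * g * g * g * g * g := by
    rw [inv_eq_iff_mul_eq_one, ← g7]; simp only [pow_succ, pow_zero, one_mul, mul_assoc]
  have h2 : h⁻¹ = h * h := by
    rw [inv_eq_iff_mul_eq_one, ← h3]; simp only [pow_succ, pow_zero, one_mul, mul_assoc]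
  have ii : i⁻¹ = i := inv_eq_of_mul_eq_one_left i2
  induction hx using Subgroup.closure_induction_right with
  | one => exact Or.inl ⟨0, 0, by simp⟩
  | mul_right x hx y hy H =>
    simp only [Set.mem_insert_iff, Set.mem_singleton_iff] at hy
    rcases hy with rfl | rfl | rfl
    · exact mg _ H
    · exact mh _ H
    · exact mi _ H
  | mul_inv_cancel x hx y hy H =>
    simp only [Set.mem_insert_iff, Set.mem_singleton_iff] at hy
    rcases hy with rfl | rfl | rfl
    · rw [g6]; simp only [← mul_assoc]
      exact mg _ (mg _ (mg _ (mg _ (mg _ (mg _ H)))))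
    · rw [h2]; simp only [← mul_assoc]
      exact mh _ (mh _ H)
    · rw [ii]; exact mi _ H

theorem pow_coprime_one {x : G} {m n : ℕ} (hmn : Nat.Coprime m n) (hm : x ^ m = 1)
    (hn : x ^ n = 1) : x = 1 := by
  have h1 := Nat.dvd_gcd (orderOf_dvd_of_pow_eq_one hm) (orderOf_dvd_of_pow_eq_one hn)
  rw [hmn.gcd_eq_one, Nat.dvd_one] at h1
  exact orderOf_eq_one_iff.mp h1

/-- collapse when `h = 1` -/
theorem collapse_h {g h i : G} (g7 : g ^ 7 = 1) (i2 : i * i = 1)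
    (hg : h * g = g ^ 4 * h) (rel : g * (i * g * i) * g = i)
    (hh : h = 1) : g = 1 ∧ h = 1 ∧ i = 1 := by
  have g1 : g = 1 := by
    subst hh
    have h3 : g ^ 3 = 1 := by
      have : g * g ^ 3 = g * 1 := by rw [← pow_succ', mul_one]; simpa using hg.symm
      exact mul_left_cancel this
    exact pow_coprime_one (by norm_num) h3 g7
  refine ⟨g1, hh, ?_⟩
  subst g1
  simpa [i2] using rel.symm

theorem collapse_i {g h i : G} (g7 : g ^ 7 = 1) (h3 : h ^ 3 = 1) (i2 : i * i = 1)
    (hg : h * g = g ^ 4 * h) (ih : i * h = h ^ 2 * i) (rel : g * (i * g * i) * g = i)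
    (hi : i = 1) : g = 1 ∧ h = 1 ∧ i = 1 := by
  refine collapse_h g7 i2 hg rel ?_
  subst hi
  have : h * h = h * 1 := by rw [mul_one, ← pow_two]; simpa using ih.symm
  exact mul_left_cancel this

theorem gh_pow {g h : G} (g7 : g ^ 7 = 1) (h3 : h ^ 3 = 1)
    (hg : h * g = g ^ 4 * h) (a b : ℕ) : (g ^ a * h ^ b) ^ 21 = 1 := by
  have key (n : ℕ) : ∃ c, (g ^ a * h ^ b) ^ n = g ^ c * h ^ (b * n) := by
    induction n with
    | zero => exact ⟨0, by simp⟩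
    | succ n ihn =>
      obtain ⟨c, hc⟩ := ihn
      refine ⟨c + 4 ^ (b * n) * a, ?_⟩
      have := hpow_gpow hg (b * n) a
      calc (g ^ a * h ^ b) ^ (n + 1) = g ^ c * (h ^ (b * n) * g ^ a) * h ^ b := by
            rw [pow_succ, hc]; simp only [mul_assoc]
        _ = _ := by rw [this, pow_add, Nat.mul_succ, pow_add]; simp only [mul_assoc]
  obtain ⟨c, hc⟩ := key 3
  rw [mul_comm b 3, pow_mul h, h3, one_pow, mul_one] at hc
  rw [show 21 = 3 * 7 by norm_num, pow_mul, hc, ← pow_mul, mul_comm, pow_mul, g7, one_pow]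

theorem collapse_B {g h i : G} (g7 : g ^ 7 = 1) (h3 : h ^ 3 = 1) (i2 : i * i = 1)
    (hg : h * g = g ^ 4 * h) (ih : i * h = h ^ 2 * i) (rel : g * (i * g * i) * g = i)
    (a b : ℕ) (hab : g ^ a * h ^ b = 1) (hne : ¬ (a % 7 = 0 ∧ b % 3 = 0)) :
    g = 1 ∧ h = 1 ∧ i = 1 := by
  have e : h ^ b = (g ^ a)⁻¹ := eq_inv_of_mul_eq_one_right hab
  have hb : h ^ b = 1 := by
    refine pow_coprime_one (m := 3) (n := 7) (by norm_num) ?_ ?_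
    · rw [← pow_mul, mul_comm, pow_mul, h3, one_pow]
    · rw [e, inv_pow, ← pow_mul, mul_comm, pow_mul, g7, one_pow, inv_one]
  have ha : g ^ a = 1 := by rwa [hb, mul_one] at hab
  by_cases hb3 : b % 3 = 0
  · have ha7 : a % 7 ≠ 0 := fun H => hne ⟨H, hb3⟩
    have g1 : g = 1 := by
      refine pow_coprime_one (m := 7) (n := a) ?_ g7 ha
      exact (Nat.Prime.coprime_iff_not_dvd (by norm_num)).2 fun H => ha7 (Nat.mod_eq_zero_of_dvd H)
    refine collapse_i g7 h3 i2 hg ih rel ?_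
    subst g1
    simpa [i2] using rel.symm
  · refine collapse_h g7 i2 hg rel ?_
    refine pow_coprime_one (m := 3) (n := b) ?_ h3 hb
    exact (Nat.Prime.coprime_iff_not_dvd (by norm_num)).2 fun H => hb3 (Nat.mod_eq_zero_of_dvd H)

theorem collapse_big {g h i : G} (g7 : g ^ 7 = 1) (h3 : h ^ 3 = 1) (i2 : i * i = 1)
    (hg : h * g = g ^ 4 * h) (ih : i * h = h ^ 2 * i) (rel : g * (i * g * i) * g = i)
    (a b d : ℕ) (hab : g ^ a * h ^ b * i * g ^ d = 1) :
    g = 1 ∧ h = 1 ∧ i = 1 := by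
  refine collapse_i g7 h3 i2 hg ih rel ?_
  have e : g ^ (d + a) * h ^ b = i := by
    have h1 : g ^ d * (g ^ a * h ^ b * i) = 1 := mul_eq_one_comm.mp hab
    have h2 : g ^ (d + a) * h ^ b * i = 1 := by
      rw [pow_add]; simpa only [mul_assoc] using h1
    rw [eq_inv_of_mul_eq_one_left h2]
    exact inv_eq_of_mul_eq_one_left i2
  refine pow_coprime_one (m := 2) (n := 21) (by norm_num) (by rw [pow_two, i2]) ?_
  rw [← e]
  exact gh_pow g7 h3 hg _ _

theorem simple_of_rel {g h i : G} (g7 : g ^ 7 = 1) (h3 : h ^ 3 = 1) (i2 : i * i = 1)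
    (hg : h * g = g ^ 4 * h) (ih : i * h = h ^ 2 * i) (rel : g * (i * g * i) * g = i)
    (gen : Subgroup.closure {g, h, i} = ⊤) (hne : g ≠ 1) : IsSimpleGroup G := by
  have : Nontrivial G := ⟨⟨g, 1, hne⟩⟩
  refine ⟨fun N hN => ?_⟩
  by_cases hbot : N = ⊥
  · exact Or.inl hbot
  right
  obtain ⟨x, hxN, hx1⟩ := N.bot_or_exists_ne_one.resolve_left hbot
  let f := QuotientGroup.mk' N
  have G7 : f g ^ 7 = 1 := by rw [← map_pow, g7, map_one]
  have H3 : f h ^ 3 = 1 := by rw [← map_pow, h3, map_one]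
  have I2 : f i * f i = 1 := by rw [← map_mul, i2, map_one]
  have HG : f h * f g = f g ^ 4 * f h := by simp only [← map_mul, ← map_pow, hg]
  have IH : f i * f h = f h ^ 2 * f i := by simp only [← map_mul, ← map_pow, ih]
  have REL : f g * (f i * f g * f i) * f g = f i := by
    simp only [← map_mul]; rw [rel]
  have hfx : f x = 1 := (QuotientGroup.eq_one_iff _).mpr hxN
  have all : f g = 1 ∧ f h = 1 ∧ f i = 1 := by
    rcases bruhat g7 h3 i2 hg ih rel x (by rw [gen]; trivial) with ⟨a, b, hab⟩ | ⟨a, b, d, hab⟩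
    · refine collapse_B G7 H3 I2 HG IH REL a b ?_ ?_
      · rw [← map_pow, ← map_pow, ← map_mul, ← hab, hfx]
      · rintro ⟨ha, hb⟩
        apply hx1
        rw [hab, ← Nat.mod_add_div a 7, ← Nat.mod_add_div b 3, ha, hb]
        simp [pow_mul, g7, h3]
    · refine collapse_big G7 H3 I2 HG IH REL a b d ?_
      simp only [← map_pow, ← map_mul]
      rw [← hab, hfx]
  rw [eq_top_iff, ← gen, Subgroup.closure_le]
  intro y hy
  simp only [Set.mem_insert_iff, Set.mem_singleton_iff] at hy
  rcases hy with rfl | rfl | rfl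
  · exact (QuotientGroup.eq_one_iff _).mp all.1
  · exact (QuotientGroup.eq_one_iff _).mp all.2.1
  · exact (QuotientGroup.eq_one_iff _).mp all.2.2

end Abstract

/-- The subgroup of `GL₃(K)` generated by `g`, `h`, and `i` is simple. -/
theorem stmt13 (ζ : K7) (hζ : IsPrimitiveRoot ζ 7)
    (gU hU iU : GL (Fin 3) K7)
    (hg : (gU : Matrix (Fin 3) (Fin 3) K7) = matG ζ)
    (hh : (hU : Matrix (Fin 3) (Fin 3) K7) = matH)
    (hi : (iU : Matrix (Fin 3) (Fin 3) K7) = matI ζ) :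
    IsSimpleGroup (Subgroup.closure {gU, hU, iU} : Subgroup (GL (Fin 3) K7)) := by
  have hΦ := aux_phi ζ hζ
  have h7 := hζ.pow_eq_one
  have g7 : gU ^ 7 = 1 := by
    apply Units.ext; simp only [Units.val_pow_eq_pow_val, hg, Units.val_one, aux_g7 ζ h7]
  have h3 : hU ^ 3 = 1 := by
    apply Units.ext; simp only [Units.val_pow_eq_pow_val, hh, Units.val_one, aux_h3]
  have i2 : iU * iU = 1 := by
    apply Units.ext; simp only [Units.val_mul, hi, Units.val_one, aux_ii ζ hΦ]
  have hgr : hU * gU = gU ^ 4 * hU := by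
    apply Units.ext
    simp only [Units.val_mul, Units.val_pow_eq_pow_val, hg, hh, aux_hg ζ h7]
  have ihr : iU * hU = hU ^ 2 * iU := by
    apply Units.ext
    simp only [Units.val_mul, Units.val_pow_eq_pow_val, hi, hh, aux_ih ζ]
  have rel : gU * (iU * gU * iU) * gU = iU := by
    apply Units.ext
    simp only [Units.val_mul, hg, hi, aux_gigig ζ hΦ]
  have hne : gU ≠ 1 := by
    intro H
    have h1 : matG ζ 2 2 = 1 := by rw [← hg, H]; simp
    have h2 : ζ = 1 := by simpa [matG] using h1
    exact hζ.ne_one (by norm_num) h2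
  have mg : gU ∈ Subgroup.closure {gU, hU, iU} := Subgroup.subset_closure (by simp)
  have mh : hU ∈ Subgroup.closure {gU, hU, iU} := Subgroup.subset_closure (by simp)
  have mi : iU ∈ Subgroup.closure {gU, hU, iU} := Subgroup.subset_closure (by simp)
  refine simple_of_rel (g := ⟨gU, mg⟩) (h := ⟨hU, mh⟩) (i := ⟨iU, mi⟩)
    (Subtype.ext g7) (Subtype.ext h3) (Subtype.ext i2) (Subtype.ext hgr) (Subtype.ext ihr)
    (Subtype.ext rel) ?_ (fun H => hne (congrArg Subtype.val H))
  rw [← Subgroup.closure_closure_coe_preimage (k := {gU, hU, iU})]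
  congr 1
  ext ⟨x, hx⟩
  simp [Subtype.ext_iff]
end

section
/- Let K = ℚ(ζ) be the 7th cyclotomic field, let R = K[x,y,z], let f4 = x^3*y + y^3*z + z^3*x and f6 = x*y^5 + x^5*z - 5*x^2*y^2*z^2 + y*z^5, let I be the ideal of R generated by the three 2×2 minors of the 3×2 Jacobian matrix of (f4, f6), and let k = R/(x,y,z) ≅ K be the residue field of R at the irrelevant maximal ideal. Then the K-vector space dimensions of Tor_i^R(R/I^2, k) for i = 0, 1, 2, 3, 4 are 1, 6, 6, 1, 0 respectively. -/
open MvPolynomial CategoryTheory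

/-- The polynomial ring `R = K[x,y,z]`. -/
noncomputable abbrev R7 : Type := MvPolynomial (Fin 3) K7

/-- The Klein quartic `f4 = x^3*y + y^3*z + z^3*x` in `K[x,y,z]`. -/
noncomputable def f4 : R7 :=
  X 0 ^ 3 * X 1 + X 1 ^ 3 * X 2 + X 2 ^ 3 * X 0

/-- The sextic `f6 = x*y^5 + x^5*z - 5*x^2*y^2*z^2 + y*z^5` in `K[x,y,z]`. -/
noncomputable def f6 : R7 :=
  X 0 * X 1 ^ 5 + X 0 ^ 5 * X 2 - 5 * X 0 ^ 2 * X 1 ^ 2 * X 2 ^ 2 + X 1 * X 2 ^ 5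

/-- The defining ideal of the Klein configuration of points: the ideal
generated by the three `2 × 2` minors of the `3 × 2` Jacobian matrix of
`(f4, f6)`. -/
noncomputable def kleinIdeal : Ideal R7 :=
  Ideal.span
    {pderiv 0 f4 * pderiv 1 f6 - pderiv 0 f6 * pderiv 1 f4,
     pderiv 0 f4 * pderiv 2 f6 - pderiv 0 f6 * pderiv 2 f4,
     pderiv 1 f4 * pderiv 2 f6 - pderiv 1 f6 * pderiv 2 f4}

/-- The irrelevant maximal ideal `(x,y,z)` of `R`. -/
noncomputable def m7 : Ideal R7 := Ideal.span {X 0, X 1, X 2}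

/-- The dimension of `Tor_i^R(R/I², k)` as a `K`-vector space, where the
`K`-module structure is obtained by restriction of scalars along `K → R`. -/
noncomputable def torDimK (i : ℕ) : ℕ :=
  @Module.finrank K7
    (((Tor (ModuleCat R7) i).obj (ModuleCat.of R7 (R7 ⧸ kleinIdeal ^ 2))).obj
      (ModuleCat.of R7 (R7 ⧸ m7))) _ _
    (Module.compHom _ (algebraMap K7 R7))

namespace KleinTor
open CategoryTheory.Limits MonoidalCategory
universe u
variable {R : Type u} [CommRing R]

/-- tensoring a short complex of modules with a chain complex -/
noncomputable def tensSeq (S : ShortComplex (ModuleCat.{u} R)) (P : ChainComplex (ModuleCat.{u} R) ℕ) :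
    ShortComplex (ChainComplex (ModuleCat.{u} R) ℕ) :=
  ShortComplex.mk
    ((NatTrans.mapHomologicalComplex ((tensoringLeft (ModuleCat.{u} R)).map S.f) _).app P)
    ((NatTrans.mapHomologicalComplex ((tensoringLeft (ModuleCat.{u} R)).map S.g) _).app P)
    (by
      ext i : 1
      have := MonoidalCategory.comp_whiskerRight S.f S.g (P.X i)
      rw [S.zero] at this
      exact this.symm.trans (by simp; rfl))

lemma tensSeq_shortExact {S : ShortComplex (ModuleCat.{u} R)} (hS : S.ShortExact)
    (P : ChainComplex (ModuleCat.{u} R) ℕ) (hP : ∀ i, Module.Flat R (P.X i)) :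
    (tensSeq S P).ShortExact := by
  apply HomologicalComplex.shortExact_of_degreewise_shortExact
  intro i
  have := hP i
  exact hS.map_of_exact (tensorRight (P.X i))

lemma flat_of_projRes {Y : ModuleCat.{u} R} (P : ProjectiveResolution Y) (i : ℕ) :
    Module.Flat R (P.complex.X i) := by
  have : Module.Projective R (P.complex.X i) :=
    (IsProjective.iff_projective (P.complex.X i)).2 (P.projective i)
  infer_instance

lemma isZero_homology_flat {Y : ModuleCat.{u} R} (P : ProjectiveResolution Y)
    (F : ModuleCat.{u} R) [Module.Flat R F] (n : ℕ) :
    IsZero ((((tensoringLeft (ModuleCat.{u} R)).obj F).mapHomologicalComplex _).obj P.complex |>.homology (n+1)) := by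
  rw [← HomologicalComplex.exactAt_iff_isZero_homology]
  have h := P.complex_exactAt_succ n
  exact h.map (tensorLeft F)

lemma isZero_tor_flat (Y F : ModuleCat.{u} R) [Module.Flat R F] (n : ℕ) :
    IsZero (((Tor (ModuleCat.{u} R) (n+1)).obj F).obj Y) := by
  let P := projectiveResolution Y
  exact (isZero_homology_flat P F n).of_iso (P.isoLeftDerivedObj ((tensoringLeft (ModuleCat.{u} R)).obj F) (n+1))

lemma tor_shift {S : ShortComplex (ModuleCat.{u} R)} (hS : S.ShortExact) [Module.Flat R S.X₂]
    (Y : ModuleCat.{u} R) (n : ℕ) :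
    Nonempty (((Tor (ModuleCat.{u} R) (n+2)).obj S.X₃).obj Y ≅ ((Tor (ModuleCat.{u} R) (n+1)).obj S.X₁).obj Y) := by
  let P := projectiveResolution Y
  have h := tensSeq_shortExact hS P.complex (flat_of_projRes P)
  have h1 : IsZero ((tensSeq S P.complex).X₂.homology (n+1+1)) := isZero_homology_flat P S.X₂ (n+1)
  have h2 : IsZero ((tensSeq S P.complex).X₂.homology (n+1)) := isZero_homology_flat P S.X₂ n
  have hr : (ComplexShape.down ℕ).Rel (n+1+1) (n+1) := by simp
  have : IsIso (h.δ (n+1+1) (n+1) hr) := h.isIso_δ _ _ _ h1 h2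
  let e := asIso (h.δ (n+1+1) (n+1) hr)
  exact ⟨P.isoLeftDerivedObj ((tensoringLeft (ModuleCat.{u} R)).obj S.X₃) (n+1+1) ≪≫
    e ≪≫
    (P.isoLeftDerivedObj ((tensoringLeft (ModuleCat.{u} R)).obj S.X₁) (n+1)).symm⟩

lemma fromZero_nat {A B : ModuleCat.{u} R} (f : A ⟶ B) {Y : ModuleCat.{u} R} (P : ProjectiveResolution Y) :
    HomologicalComplex.opcyclesMap ((NatTrans.mapHomologicalComplex ((tensoringLeft (ModuleCat.{u} R)).map f) _).app P.complex) 0 ≫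
      P.fromLeftDerivedZero' ((tensoringLeft (ModuleCat.{u} R)).obj B) =
    P.fromLeftDerivedZero' ((tensoringLeft (ModuleCat.{u} R)).obj A) ≫ (f ▷ Y) := by
  rw [← cancel_epi (HomologicalComplex.pOpcycles _ _)]
  rw [HomologicalComplex.p_opcyclesMap_assoc, ProjectiveResolution.pOpcycles_comp_fromLeftDerivedZero',
    ← Category.assoc (HomologicalComplex.pOpcycles _ _),
    ProjectiveResolution.pOpcycles_comp_fromLeftDerivedZero']
  exact (whisker_exchange _ _).symm

instance pfc (A : ModuleCat.{u} R) : PreservesFiniteColimits ((tensoringLeft (ModuleCat.{u} R)).obj A) :=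
  inferInstanceAs (PreservesFiniteColimits (tensorLeft A))

noncomputable def torZero (A Y : ModuleCat.{u} R) : ((Tor (ModuleCat.{u} R) 0).obj A).obj Y ≅ A ⊗ Y :=
  ((tensoringLeft (ModuleCat.{u} R)).obj A).leftDerivedZeroIsoSelf.app Y

lemma tor_one {S : ShortComplex (ModuleCat.{u} R)} (hS : S.ShortExact) [Module.Flat R S.X₂]
    (Y : ModuleCat.{u} R) (h0 : S.f ▷ Y = 0) :
    Nonempty (((Tor (ModuleCat.{u} R) 1).obj S.X₃).obj Y ≅ S.X₁ ⊗ Y) := by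
  let P := projectiveResolution Y
  have h := tensSeq_shortExact hS P.complex (flat_of_projRes P)
  have h1 : IsZero ((tensSeq S P.complex).X₂.homology (0+1)) := isZero_homology_flat P S.X₂ 0
  have hm : HomologicalComplex.homologyMap (tensSeq S P.complex).f 0 = 0 := by
    rw [← cancel_mono (HomologicalComplex.homologyι _ _), HomologicalComplex.homologyι_naturality]
    have := fromZero_nat S.f P
    rw [h0, comp_zero, ← zero_comp (f := P.fromLeftDerivedZero' ((tensoringLeft (ModuleCat.{u} R)).obj S.X₂)), cancel_mono] at this
    erw [this]
    exact comp_zero.trans zero_comp.symm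
  have hr : (ComplexShape.down ℕ).Rel (0+1) 0 := by simp
  have m1 : Mono (h.δ (0+1) 0 hr) := h.mono_δ _ _ _ h1
  have e1 : Epi (h.δ (0+1) 0 hr) := (h.homology_exact₁ (0+1) 0 hr).epi_f hm
  have : IsIso (h.δ (0+1) 0 hr) := isIso_of_mono_of_epi _
  let e := asIso (h.δ (0+1) 0 hr)
  exact ⟨P.isoLeftDerivedObj ((tensoringLeft (ModuleCat.{u} R)).obj S.X₃) (0+1) ≪≫
    e ≪≫
    (P.isoLeftDerivedObj ((tensoringLeft (ModuleCat.{u} R)).obj S.X₁) 0).symm ≪≫ torZero _ _⟩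

lemma tens_iso {S : ShortComplex (ModuleCat.{u} R)} (hS : S.ShortExact) 
    (Y : ModuleCat.{u} R) (h0 : S.f ▷ Y = 0) :
    Nonempty (S.X₂ ⊗ Y ≅ S.X₃ ⊗ Y) := by
  have hg : Function.Surjective S.g.hom := (ModuleCat.epi_iff_surjective _).1 hS.epi_g
  have hex : Function.Exact S.f.hom S.g.hom :=
    (ShortComplex.ShortExact.moduleCat_exact_iff_function_exact S).1 hS.exact
  have hx := rTensor_exact Y hex hg
  have h0' : S.f.hom.rTensor Y = 0 := congrArg ModuleCat.Hom.hom h0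
  have hinj : Function.Injective (S.g.hom.rTensor Y) := by
    rw [injective_iff_map_eq_zero]
    intro x hx0
    obtain ⟨y, rfl⟩ := (hx x).1 hx0
    rw [h0']; rfl
  exact ⟨(LinearEquiv.ofBijective (S.g.hom.rTensor Y)
    ⟨hinj, LinearMap.rTensor_surjective Y hg⟩).toModuleIso⟩

lemma whisker_zero {A F : ModuleCat.{u} R} (f : A ⟶ F) (I : Ideal R) 
    (h : ∀ s, f.hom s ∈ I • (⊤ : Submodule R F)) : f ▷ (ModuleCat.of R (R ⧸ I)) = 0 := by
  apply ModuleCat.MonoidalCategory.tensor_ext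
  intro s t
  change (f.hom s) ⊗ₜ[R] t = 0
  refine Submodule.smul_induction_on (p := fun x => x ⊗ₜ[R] t = 0) (h s) ?_ ?_
  · intro r hr n _
    rw [TensorProduct.smul_tmul]
    obtain ⟨t, rfl⟩ := Ideal.Quotient.mk_surjective t
    have : r • (Ideal.Quotient.mk I t) = 0 := by
      rw [← Ideal.Quotient.mk_eq_mk, ← Submodule.Quotient.mk_smul, Submodule.Quotient.mk_eq_zero]
      exact I.mul_mem_right _ hr
    erw [this]; simp
  · intro x y hx hy
    rw [TensorProduct.add_tmul, hx, hy, add_zero]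
end KleinTor
namespace KleinAlg
variable {R : Type*} [CommRing R]

/-- first differential -/
def D1 (m0 m1 m2 : R) : (Fin 6 → R) →ₗ[R] R :=
  Fintype.linearCombination R ![m0 * m0, m1 * m1, m2 * m2, m0 * m1, m0 * m2, m1 * m2]

/-- matrix of the second differential -/
def M2 (a0 a1 a2 b0 b1 b2 : R) : Matrix (Fin 6) (Fin 6) R :=
  !![a0, 0, 0, b0, 0, 0;
     0, a1, 0, 0, b1, 0;
     0, 0, a2, 0, 0, b2;
     a1, a0, 0, b1, b0, 0;
     a2, 0, a0, b2, 0, b0;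
     0, a2, a1, 0, b2, b1]

/-- second differential -/
def D2 (a0 a1 a2 b0 b1 b2 : R) : (Fin 6 → R) →ₗ[R] (Fin 6 → R) :=
  (M2 a0 a1 a2 b0 b1 b2).mulVecLin

/-- third differential -/
def D3 (a0 a1 a2 b0 b1 b2 : R) : R →ₗ[R] (Fin 6 → R) :=
  LinearMap.toSpanSingleton R _ ![b0, b1, b2, -a0, -a1, -a2]

lemma D1_apply (m0 m1 m2 : R) (q : Fin 6 → R) : D1 m0 m1 m2 q =
    q 0 * (m0 * m0) + q 1 * (m1 * m1) + q 2 * (m2 * m2) + q 3 * (m0 * m1) + q 4 * (m0 * m2)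
      + q 5 * (m1 * m2) := by
  simp [D1, Fintype.linearCombination_apply, Fin.sum_univ_succ]; ring

lemma D2_apply (a0 a1 a2 b0 b1 b2 : R) (w : Fin 6 → R) : D2 a0 a1 a2 b0 b1 b2 w =
    ![a0 * w 0 + b0 * w 3, a1 * w 1 + b1 * w 4, a2 * w 2 + b2 * w 5,
      a1 * w 0 + a0 * w 1 + b1 * w 3 + b0 * w 4,
      a2 * w 0 + a0 * w 2 + b2 * w 3 + b0 * w 5,
      a2 * w 1 + a1 * w 2 + b2 * w 4 + b1 * w 5] := by
  ext i
  fin_cases i <;> simp [D2, M2, Matrix.mulVec, dotProduct, Fin.sum_univ_succ] <;> ring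

lemma D3_apply (a0 a1 a2 b0 b1 b2 r : R) : D3 a0 a1 a2 b0 b1 b2 r =
    ![r * b0, r * b1, r * b2, -(r * a0), -(r * a1), -(r * a2)] := by
  ext i
  fin_cases i <;> simp [D3]

lemma D3_inj [IsDomain R] {a0 a1 a2 b0 b1 b2 : R} (h : a0 ≠ 0) :
    Function.Injective (D3 a0 a1 a2 b0 b1 b2) := by
  rw [injective_iff_map_eq_zero]
  intro r hr
  have := congrFun hr 3
  simp [D3_apply] at this
  tauto

lemma D2_D3 (a0 a1 a2 b0 b1 b2 r : R) : D2 a0 a1 a2 b0 b1 b2 (D3 a0 a1 a2 b0 b1 b2 r) = 0 := by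
  rw [D2_apply, D3_apply]
  ext i
  fin_cases i <;> simp <;> ring

lemma D1_D2 {a0 a1 a2 b0 b1 b2 m0 m1 m2 : R} (h0 : m0 = a1 * b2 - a2 * b1)
    (h1 : m1 = a2 * b0 - a0 * b2) (h2 : m2 = a0 * b1 - a1 * b0) (w : Fin 6 → R) :
    D1 m0 m1 m2 (D2 a0 a1 a2 b0 b1 b2 w) = 0 := by
  subst h0 h1 h2
  rw [D1_apply, D2_apply]
  simp; ring

lemma exact2 [IsDomain R] {a0 a1 a2 b0 b1 b2 m0 m1 m2 : R} (h0 : m0 = a1 * b2 - a2 * b1)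
    (h1 : m1 = a2 * b0 - a0 * b2) (h2 : m2 = a0 * b1 - a1 * b0)
    (n0 : m0 ≠ 0) (n1 : m1 ≠ 0) (n2 : m2 ≠ 0) (na : a0 ≠ 0)
    (co : ∀ v, a0 ∣ a1 * v → a0 ∣ v) (w : Fin 6 → R)
    (hw : D2 a0 a1 a2 b0 b1 b2 w = 0) : ∃ r, D3 a0 a1 a2 b0 b1 b2 r = w := by
  rw [D2_apply] at hw
  have e0 := congrFun hw 0
  have e1 := congrFun hw 1
  have e2 := congrFun hw 2
  have e3 := congrFun hw 3
  have e4 := congrFun hw 4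
  have e5 := congrFun hw 5
  simp at e0 e1 e2 e3 e4 e5
  have c0 : a1 * w 5 - a2 * w 4 = 0 := by
    apply (mul_eq_zero.1 _).resolve_left n0
    rw [h0]
    linear_combination a2 ^ 2 * e1 + a1 ^ 2 * e2 - a1 * a2 * e5
  have c1 : a2 * w 3 - a0 * w 5 = 0 := by
    apply (mul_eq_zero.1 _).resolve_left n1
    rw [h1]
    linear_combination a2 ^ 2 * e0 + a0 ^ 2 * e2 - a0 * a2 * e4
  have c2 : a0 * w 4 - a1 * w 3 = 0 := by
    apply (mul_eq_zero.1 _).resolve_left n2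
    rw [h2]
    linear_combination a1 ^ 2 * e0 + a0 ^ 2 * e1 - a0 * a1 * e3
  obtain ⟨c, hc⟩ := co (w 3) ⟨w 4, by linear_combination -c2⟩
  have h4 : w 4 = a1 * c := by
    apply mul_left_cancel₀ na
    linear_combination c2 + a1 * hc
  have h5 : w 5 = a2 * c := by
    apply mul_left_cancel₀ na
    linear_combination -c1 + a2 * hc
  have k0 : w 0 = - b0 * c := by
    apply mul_left_cancel₀ na
    linear_combination e0 - b0 * hc
  have k1 : w 1 = - b1 * c := by
    apply mul_left_cancel₀ na
    linear_combination e3 - a1 * k0 - b1 * hc - b0 * h4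
  have k2 : w 2 = - b2 * c := by
    apply mul_left_cancel₀ na
    linear_combination e4 - a2 * k0 - b2 * hc - b0 * h5
  refine ⟨-c, ?_⟩
  rw [D3_apply]
  ext i
  fin_cases i <;> simp [hc, h4, h5, k0, k1, k2] <;> ring

/-- the binary step -/
lemma binary [IsDomain R] {p q A B C : R} (np : p ≠ 0) (co : ∀ v, p ∣ q * v → p ∣ v)
    (h : A * (p * p) + B * (p * q) + C * (q * q) = 0) :
    ∃ s t, A = q * s ∧ C = p * t ∧ B = -(s * p) - t * q := by
  obtain ⟨t, ht⟩ := co C (co (q * C) ⟨-(A * p + B * q), by linear_combination h⟩)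
  have h' : p * (A * p + B * q + t * q * q) = 0 := by rw [ht] at h; linear_combination h
  have h'' := (mul_eq_zero.1 h').resolve_left np
  obtain ⟨s', hs⟩ := co (B + t * q) ⟨-A, by linear_combination h''⟩
  refine ⟨-s', t, ?_, ht, by linear_combination hs⟩
  apply mul_left_cancel₀ np
  linear_combination h'' - q * hs

lemma loc0 [IsDomain R] {a0 a1 a2 b0 b1 b2 m0 m1 m2 : R} (h0 : m0 = a1 * b2 - a2 * b1)
    (h1 : m1 = a2 * b0 - a0 * b2) (h2 : m2 = a0 * b1 - a1 * b0)
    (n1 : m1 ≠ 0) (co : ∀ v, m1 ∣ m2 * v → m1 ∣ v) (q : Fin 6 → R)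
    (hq : D1 m0 m1 m2 q = 0) : ∃ w, D2 a0 a1 a2 b0 b1 b2 w = a0 ^ 2 • q := by
  rw [D1_apply] at hq
  have hm : a0 * m0 + a1 * m1 + a2 * m2 = 0 := by subst h0 h1 h2; ring
  obtain ⟨s, t, hA, hC, hB⟩ := binary (A := a0 ^ 2 * q 1 - a0 * a1 * q 3 + a1 ^ 2 * q 0)
    (B := a0 ^ 2 * q 5 - a0 * a2 * q 3 - a0 * a1 * q 4 + 2 * a1 * a2 * q 0)
    (C := a0 ^ 2 * q 2 - a0 * a2 * q 4 + a2 ^ 2 * q 0) n1 co (by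
      linear_combination a0 ^ 2 * hq - (q 0 * (a0 * m0 - a1 * m1 - a2 * m2) + a0 * q 3 * m1 + a0 * q 4 * m2) * hm)
  -- m2 T1 - m1 T2 = a0 (b.T) - b0 (a.T)
  refine ⟨![a0 * q 0, a0 * q 3 - a1 * q 0 - b0 * s, a0 * q 4 - a2 * q 0 + b0 * t,
    0, a0 * s, -(a0 * t)], ?_⟩
  rw [D2_apply]
  ext i
  subst h0 h1 h2
  fin_cases i
  · simp; ring
  · simp; linear_combination -hA
  · simp; linear_combination -hC
  · simp; ring
  · simp; ring
  · simp; linear_combination -hB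

lemma loc1 [IsDomain R] {a0 a1 a2 b0 b1 b2 m0 m1 m2 : R} (h0 : m0 = a1 * b2 - a2 * b1)
    (h1 : m1 = a2 * b0 - a0 * b2) (h2 : m2 = a0 * b1 - a1 * b0)
    (n2 : m2 ≠ 0) (co : ∀ v, m2 ∣ m0 * v → m2 ∣ v) (q : Fin 6 → R)
    (hq : D1 m0 m1 m2 q = 0) : ∃ w, D2 a0 a1 a2 b0 b1 b2 w = a1 ^ 2 • q := by
  obtain ⟨w, hw⟩ := loc0 h1 h2 h0 n2 co ![q 1, q 2, q 0, q 5, q 3, q 4] (by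
    rw [D1_apply] at hq ⊢; simp; linear_combination hq)
  rw [D2_apply] at hw
  refine ⟨![w 2, w 0, w 1, w 5, w 3, w 4], ?_⟩
  rw [D2_apply]
  ext i
  have e0 := congrFun hw 0
  have e1 := congrFun hw 1
  have e2 := congrFun hw 2
  have e3 := congrFun hw 3
  have e4 := congrFun hw 4
  have e5 := congrFun hw 5
  simp at e0 e1 e2 e3 e4 e5
  fin_cases i
  · simp; linear_combination e2
  · simp; linear_combination e0
  · simp; linear_combination e1
  · simp; linear_combination e4
  · simp; linear_combination e5
  · simp; linear_combination e3

lemma loc2 [IsDomain R] {a0 a1 a2 b0 b1 b2 m0 m1 m2 : R} (h0 : m0 = a1 * b2 - a2 * b1)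
    (h1 : m1 = a2 * b0 - a0 * b2) (h2 : m2 = a0 * b1 - a1 * b0)
    (n0 : m0 ≠ 0) (co : ∀ v, m0 ∣ m1 * v → m0 ∣ v) (q : Fin 6 → R)
    (hq : D1 m0 m1 m2 q = 0) : ∃ w, D2 a0 a1 a2 b0 b1 b2 w = a2 ^ 2 • q := by
  obtain ⟨w, hw⟩ := loc1 h1 h2 h0 n0 co ![q 1, q 2, q 0, q 5, q 3, q 4] (by
    rw [D1_apply] at hq ⊢; simp; linear_combination hq)
  rw [D2_apply] at hw
  refine ⟨![w 2, w 0, w 1, w 5, w 3, w 4], ?_⟩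
  rw [D2_apply]
  ext i
  have e0 := congrFun hw 0
  have e1 := congrFun hw 1
  have e2 := congrFun hw 2
  have e3 := congrFun hw 3
  have e4 := congrFun hw 4
  have e5 := congrFun hw 5
  simp at e0 e1 e2 e3 e4 e5
  fin_cases i
  · simp; linear_combination e2
  · simp; linear_combination e0
  · simp; linear_combination e1
  · simp; linear_combination e4
  · simp; linear_combination e5
  · simp; linear_combination e3

/-- depth argument, one step: an element of the cokernel killed by a regular sequence of
length three vanishes -/
lemma depth_step {x y z : R} {F3 F2 F1 : Type*} [AddCommGroup F3] [Module R F3] [AddCommGroup F2]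
    [Module R F2] [AddCommGroup F1] [Module R F1] (d3 : F3 →ₗ[R] F2) (d2 : F2 →ₗ[R] F1)
    (i3 : Function.Injective d3) (ex : ∀ w, d2 w = 0 → ∃ r, d3 r = w) (cx : ∀ r, d2 (d3 r) = 0)
    (hz3 : ∀ r t s : F3, z • r = x • s + y • t → ∃ s' t', r = x • s' + y • t')
    (hy2 : ∀ v w : F2, y • v = x • w → ∃ s, v = x • s)
    (hx1 : ∀ r : F1, x • r = 0 → r = 0)
    (q : F1) (hx : ∃ w, d2 w = x • q) (hy : ∃ w, d2 w = y • q) (hz : ∃ w, d2 w = z • q) :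
    ∃ w, d2 w = q := by
  obtain ⟨u, hu⟩ := hx
  obtain ⟨v, hv⟩ := hy
  obtain ⟨w, hw⟩ := hz
  obtain ⟨p, hp⟩ := ex (y • u - x • v) (by simp [hu, hv, smul_comm x y])
  obtain ⟨r, hr⟩ := ex (z • u - x • w) (by simp [hu, hw, smul_comm x z])
  obtain ⟨s, hs⟩ := ex (z • v - y • w) (by simp [hv, hw, smul_comm y z])
  have h1 : z • p = x • (-s) + y • r := by
    apply i3
    simp only [map_smul, map_add, map_neg, hp, hr, hs]
    module
  obtain ⟨α, β, hab⟩ := hz3 _ _ _ h1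
  -- p = x α + y β; replace u by u - β.., v by v + α
  obtain ⟨t, ht⟩ := hy2 (u - d3 β) (v + d3 α) (by
    have : d3 p = x • d3 α + y • d3 β := by rw [hab]; simp
    rw [smul_sub, smul_add]
    rw [hp] at this
    rw [sub_eq_iff_eq_add] at this
    rw [this]; module)
  refine ⟨t, ?_⟩
  have : x • (d2 t - q) = 0 := by
    rw [smul_sub, ← map_smul, ← ht, map_sub, cx, hu]; simp
  exact sub_eq_zero.1 (hx1 _ this)

/-- if `x y z` are nilpotent on `q` modulo `N`, and `M / N` has no socle, then `q ∈ N`. -/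
lemma nilp_step {x y z : R} {M : Type*} [AddCommGroup M] [Module R M] (N : Submodule R M)
    (soc : ∀ q, x • q ∈ N → y • q ∈ N → z • q ∈ N → q ∈ N) (n : ℕ) :
    ∀ i j k, i + j + k = n → ∀ q, x ^ i • q ∈ N → y ^ j • q ∈ N → z ^ k • q ∈ N → q ∈ N := by
  induction n with
  | zero =>
    intro i j k h q hx
    obtain rfl : i = 0 := by omega
    intros
    simpa using hx
  | succ n ih =>
    intro i j k h q hx hy hz
    rcases i with _ | i
    · simpa using hx
    rcases j with _ | j
    · simpa using hy
    rcases k with _ | k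
    · simpa using hz
    refine soc q ?_ ?_ ?_
    · refine ih i (j+1) (k+1) (by omega) _ ?_ ?_ ?_
      · rwa [smul_smul, ← pow_succ]
      · rw [smul_comm]; exact N.smul_mem _ hy
      · rw [smul_comm]; exact N.smul_mem _ hz
    · refine ih (i+1) j (k+1) (by omega) _ ?_ ?_ ?_
      · rw [smul_comm]; exact N.smul_mem _ hx
      · rwa [smul_smul, ← pow_succ]
      · rw [smul_comm]; exact N.smul_mem _ hz
    · refine ih (i+1) (j+1) k (by omega) _ ?_ ?_ ?_
      · rw [smul_comm]; exact N.smul_mem _ hx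
      · rw [smul_comm]; exact N.smul_mem _ hy
      · rwa [smul_smul, ← pow_succ]
end KleinAlg
namespace KleinSpec
open MvPolynomial

lemma a0_eq : pderiv 0 f4 = 3 * X 0 ^ 2 * X 1 + X 2 ^ 3 := by
  simp [f4, pderiv_X]; ring
lemma a1_eq : pderiv 1 f4 = 3 * X 1 ^ 2 * X 2 + X 0 ^ 3 := by
  simp [f4, pderiv_X]; ring
lemma a2_eq : pderiv 2 f4 = 3 * X 2 ^ 2 * X 0 + X 1 ^ 3 := by
  simp [f4, pderiv_X]; ring
lemma b0_eq : pderiv 0 f6 = X 1 ^ 5 + 5 * X 0 ^ 4 * X 2 - 10 * X 0 * X 1 ^ 2 * X 2 ^ 2 := by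
  have : pderiv 0 (5 : R7) = 0 := pderiv_C
  simp [f6, pderiv_X, this]; ring
lemma b1_eq : pderiv 1 f6 = X 2 ^ 5 + 5 * X 1 ^ 4 * X 0 - 10 * X 1 * X 2 ^ 2 * X 0 ^ 2 := by
  have : pderiv 1 (5 : R7) = 0 := pderiv_C
  simp [f6, pderiv_X, this]; ring
lemma b2_eq : pderiv 2 f6 = X 0 ^ 5 + 5 * X 2 ^ 4 * X 1 - 10 * X 2 * X 0 ^ 2 * X 1 ^ 2 := by
  have : pderiv 2 (5 : R7) = 0 := pderiv_C
  simp [f6, pderiv_X, this]; ring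

/-- cross product -/
noncomputable def m0 : R7 := pderiv 1 f4 * pderiv 2 f6 - pderiv 2 f4 * pderiv 1 f6
/-- cross product -/
noncomputable def m1 : R7 := pderiv 2 f4 * pderiv 0 f6 - pderiv 0 f4 * pderiv 2 f6
/-- cross product -/
noncomputable def m2 : R7 := pderiv 0 f4 * pderiv 1 f6 - pderiv 1 f4 * pderiv 0 f6

lemma f4_hom : f4.IsHomogeneous 4 := by
  unfold f4
  have h (i j : Fin 3) : (X i ^ 3 * X j : R7).IsHomogeneous 4 :=
    (isHomogeneous_X_pow i 3).mul (isHomogeneous_X _ j)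
  exact ((h _ _).add (h _ _)).add (h _ _)

lemma f6_hom : f6.IsHomogeneous 6 := by
  unfold f6
  have h (i j : Fin 3) : (X i * X j ^ 5: R7).IsHomogeneous 6 :=
    (isHomogeneous_X _ i).mul (isHomogeneous_X_pow j 5)
  have h' (i j : Fin 3) : (X i ^ 5 * X j : R7).IsHomogeneous 6 :=
    (isHomogeneous_X_pow i 5).mul (isHomogeneous_X _ j)
  refine (((h _ _).add (h' _ _)).sub ?_).add (h _ _)
  have h5 : (5 : R7).IsHomogeneous 0 := isHomogeneous_C _ (5 : K7)
  exact (((h5.mul (isHomogeneous_X_pow 0 2)).mul (isHomogeneous_X_pow 1 2)).mul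
    (isHomogeneous_X_pow 2 2))

lemma a_hom (i : Fin 3) : (pderiv i f4).IsHomogeneous 3 := f4_hom.pderiv
lemma b_hom (i : Fin 3) : (pderiv i f6).IsHomogeneous 5 := f6_hom.pderiv
lemma m0_hom : m0.IsHomogeneous 8 := ((a_hom 1).mul (b_hom 2)).sub ((a_hom 2).mul (b_hom 1))
lemma m1_hom : m1.IsHomogeneous 8 := ((a_hom 2).mul (b_hom 0)).sub ((a_hom 0).mul (b_hom 2))
lemma m2_hom : m2.IsHomogeneous 8 := ((a_hom 0).mul (b_hom 1)).sub ((a_hom 1).mul (b_hom 0))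

lemma unit_of_dvd {σ F : Type*} [Field F] {d p : MvPolynomial σ F} {n : ℕ} (hp : p.IsHomogeneous n)
    (p0 : p ≠ 0) (hd : d ∣ p) (hc : constantCoeff d ≠ 0) : IsUnit d := by
  obtain ⟨e, rfl⟩ := hd
  have d0 : d ≠ 0 := left_ne_zero_of_mul p0
  have e0 : e ≠ 0 := right_ne_zero_of_mul p0
  have h1 : (n : ℕ∞) ≤ ((d * e : MvPolynomial σ F) : MvPowerSeries σ F).order := by
    apply MvPowerSeries.le_order
    intro m hm
    rw [coeff_coe]
    by_contra h
    have := hp h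
    have h2 : m.degree = n := by rw [Finsupp.degree_eq_weight_one]; exact this
    rw [h2] at hm
    exact lt_irrefl _ hm
  have h2 : ((d : MvPowerSeries σ F)).order = 0 := by
    by_contra h
    have h := MvPowerSeries.order_ne_zero_iff_constCoeff_eq_zero.1 h
    apply hc
    rw [← h, ← MvPowerSeries.coeff_zero_eq_constantCoeff_apply, coeff_coe]
    rfl
  rw [coe_mul, MvPowerSeries.order_mul, h2, zero_add] at h1
  have h3 : n ≤ e.totalDegree := by
    obtain ⟨m, hm⟩ := exists_coeff_ne_zero e0
    have h4 : (n : ℕ∞) ≤ m.degree := h1.trans (MvPowerSeries.order_le (by rwa [coeff_coe]))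
    have h5 := le_totalDegree (mem_support_iff.2 hm)
    have h6 : n ≤ m.degree := by exact_mod_cast h4
    exact h6.trans h5
  have h4 := hp.totalDegree p0
  rw [totalDegree_mul_of_isDomain d0 e0] at h4
  have h5 : d.totalDegree = 0 := by omega
  rw [totalDegree_eq_zero_iff_eq_C] at h5
  rw [h5]
  exact (IsUnit.mk0 _ hc).map C

/-- set variable `k` to zero -/
noncomputable def φ (k : Fin 3) : R7 →ₐ[K7] R7 := aeval (fun l => if l = k then 0 else X l)

lemma φ_X (k l : Fin 3) : φ k (X l) = if l = k then 0 else X l := by simp [φ]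

lemma φ_3 (k : Fin 3) : φ k 3 = 3 := map_ofNat _ 3
lemma φ_5 (k : Fin 3) : φ k 5 = 5 := map_ofNat _ 5

lemma φ_const (k : Fin 3) (d : R7) : constantCoeff (φ k d) = constantCoeff d := by
  have : (constantCoeff (R := K7)).comp (φ k : R7 →+* R7) = constantCoeff := by
    apply MvPolynomial.ringHom_ext
    · intro r; simp [φ]
    · intro i; simp [φ]; split_ifs <;> simp
  exact congrArg (fun f => f d) this

lemma cop {p q : R7} {n : ℕ} (hp : p.IsHomogeneous n) (p0 : p ≠ 0) (i j k : Fin 3) (hij : i ≠ j)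
    (N : ℕ) (h : ∀ e, e ∣ φ k p → e ∣ φ k q → e ∣ X i ^ N ∧ e ∣ X j ^ N) (v : R7)
    (hv : p ∣ q * v) : p ∣ v := by
  have hrel : IsRelPrime p q := by
    intro d hd1 hd2
    apply unit_of_dvd hp p0 hd1
    obtain ⟨h1, h2⟩ := h (φ k d) (map_dvd _ hd1) (map_dvd _ hd2)
    have hx : IsRelPrime (X i ^ N : R7) (X j ^ N) := by
      apply IsRelPrime.pow
      rw [(X_prime (i := i)).irreducible.isRelPrime_iff_not_dvd]
      intro h
      rw [X_dvd_X] at h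
      tauto
    have := hx h1 h2
    rw [← φ_const k]
    exact (this.map constantCoeff).ne_zero
  exact hrel.dvd_of_dvd_mul_left hv

lemma dvd_of_14 {e w : R7} (h : e ∣ 14 * w) : e ∣ w := by
  have h14 : IsUnit (14 : R7) := by
    have : (14 : R7) = C 14 := (map_ofNat C 14).symm
    rw [this]
    exact (IsUnit.mk0 _ (by norm_num)).map C
  exact (h14.dvd_mul_left).1 h

lemma a01 (v : R7) (h : pderiv 0 f4 ∣ pderiv 1 f4 * v) : pderiv 0 f4 ∣ v := by
  refine cop (a_hom 0) ?_ 2 0 1 (by decide) 3 ?_ v h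
  · intro h0
    have := congrArg (eval ![0, 0, 1]) h0
    simp [a0_eq] at this
  · intro e he1 he2
    simp [a0_eq, a1_eq, φ_X] at he1 he2
    exact ⟨he1, he2⟩

lemma a0_ne : pderiv 0 f4 ≠ 0 := by
  intro h0
  have := congrArg (eval ![0, 0, 1]) h0
  simp [a0_eq] at this
set_option linter.unusedSimpArgs false

lemma m0_ne : m0 ≠ 0 := by
  intro h0
  have := congrArg (eval ![1, 0, 0]) h0
  simp [m0, a0_eq, a1_eq, a2_eq, b0_eq, b1_eq, b2_eq] at this
lemma m1_ne : m1 ≠ 0 := by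
  intro h0
  have := congrArg (eval ![0, 1, 0]) h0
  simp [m1, a0_eq, a1_eq, a2_eq, b0_eq, b1_eq, b2_eq] at this
lemma m2_ne : m2 ≠ 0 := by
  intro h0
  have := congrArg (eval ![0, 0, 1]) h0
  simp [m2, a0_eq, a1_eq, a2_eq, b0_eq, b1_eq, b2_eq] at this

lemma dvd_aux {x z e A B : R7} (hA : A = x ^ 8 - 3 * x * z ^ 7) (hB : B = z ^ 8 - 5 * x ^ 7 * z)
    (h1 : e ∣ A) (h2 : e ∣ B) : e ∣ x ^ 15 ∧ e ∣ z ^ 15 := by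
  obtain ⟨r, hr⟩ := h1
  obtain ⟨s, hs⟩ := h2
  constructor
  · apply dvd_of_14
    refine ⟨14 * x ^ 7 * r - 3 * z ^ 7 * r - 9 * x * z ^ 6 * s, ?_⟩
    linear_combination (14 * x ^ 7 - 3 * z ^ 7) * (hr - hA) - 9 * x * z ^ 6 * (hs - hB)
  · apply dvd_of_14
    refine ⟨14 * z ^ 7 * s - 25 * x ^ 6 * z * r - 5 * x ^ 7 * s, ?_⟩
    linear_combination (14 * z ^ 7 - 5 * x ^ 7) * (hs - hB) - 25 * x ^ 6 * z * (hr - hA)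

lemma m20 (v : R7) (h : m2 ∣ m0 * v) : m2 ∣ v := by
  refine cop m2_hom m2_ne 0 2 1 (by decide) 15 ?_ v h
  intro e he1 he2
  refine dvd_aux ?_ ?_ he2 he1 <;>
  · simp [m0, m2, a0_eq, a1_eq, a2_eq, b0_eq, b1_eq, b2_eq, φ_X, φ_3, φ_5]; ring

lemma m01 (v : R7) (h : m0 ∣ m1 * v) : m0 ∣ v := by
  refine cop m0_hom m0_ne 1 0 2 (by decide) 15 ?_ v h
  intro e he1 he2
  refine dvd_aux ?_ ?_ he2 he1 <;>
  · simp [m0, m1, a0_eq, a1_eq, a2_eq, b0_eq, b1_eq, b2_eq, φ_X, φ_3, φ_5]; ring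

lemma m12 (v : R7) (h : m1 ∣ m2 * v) : m1 ∣ v := by
  refine cop m1_hom m1_ne 2 1 0 (by decide) 15 ?_ v h
  intro e he1 he2
  refine dvd_aux ?_ ?_ he2 he1 <;>
  · simp [m1, m2, a0_eq, a1_eq, a2_eq, b0_eq, b1_eq, b2_eq, φ_X, φ_3, φ_5]; ring

lemma X_mem_radical (i : Fin 3) :
    (X i : R7) ∈ (Ideal.span {pderiv 0 f4 ^ 2, pderiv 1 f4 ^ 2, pderiv 2 f4 ^ 2} : Ideal R7).radical := by
  rw [Ideal.radical_eq_sInf, Ideal.mem_sInf]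
  rintro J ⟨hJ, hp⟩
  have s0 : pderiv 0 f4 ∈ J := hp.mem_of_pow_mem 2 (hJ (Ideal.subset_span (by simp)))
  have s1 : pderiv 1 f4 ∈ J := hp.mem_of_pow_mem 2 (hJ (Ideal.subset_span (by simp)))
  have s2 : pderiv 2 f4 ∈ J := hp.mem_of_pow_mem 2 (hJ (Ideal.subset_span (by simp)))
  rw [a0_eq] at s0
  rw [a1_eq] at s1
  rw [a2_eq] at s2
  have key : (X 0 * X 1 * X 2 : R7) ∈ J := by
    apply hp.mem_of_pow_mem 3
    have h14 : (C (1/28 : K7)) * (28 : R7) = 1 := by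
      have : (28 : R7) = C 28 := (map_ofNat C 28).symm
      rw [this, ← C_mul]; norm_num
    have : (28 * (X 0 * X 1 * X 2) ^ 3 : R7) ∈ J := by
      have h := J.add_mem (J.add_mem (J.mul_mem_left (X 0 ^ 3 * X 1 ^ 3) s0)
        (J.mul_mem_left (- (3 * X 0 ^ 2 * X 1) * X 1 ^ 3) s1))
        (J.mul_mem_left (9 * X 0 ^ 2 * X 1 ^ 3 * X 2) s2)
      convert h using 1
      ring
    have := J.mul_mem_left (C (1/28 : K7)) this
    rwa [← mul_assoc, h14, one_mul] at this
  have r0 : (X 0 : R7) ∈ J → (X 2 : R7) ∈ J := fun h => hp.mem_of_pow_mem 3 (by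
    have := J.sub_mem s0 (J.mul_mem_left (3 * X 0 * X 1) h)
    convert this using 1; ring)
  have r1 : (X 1 : R7) ∈ J → (X 0 : R7) ∈ J := fun h => hp.mem_of_pow_mem 3 (by
    have := J.sub_mem s1 (J.mul_mem_left (3 * X 1 * X 2) h)
    convert this using 1; ring)
  have r2 : (X 2 : R7) ∈ J → (X 1 : R7) ∈ J := fun h => hp.mem_of_pow_mem 3 (by
    have := J.sub_mem s2 (J.mul_mem_left (3 * X 2 * X 0) h)
    convert this using 1; ring)
  have h01 := hp.mem_or_mem key
  have : (X 0 : R7) ∈ J := by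
    rcases h01 with h | h
    · rcases hp.mem_or_mem h with h | h
      · exact h
      · exact r1 h
    · exact r1 (r2 h)
  fin_cases i
  · exact this
  · exact r2 (r0 this)
  · exact r0 this

lemma reg_z (r s t : R7) (h : X 2 * r = X 0 * s + X 1 * t) : ∃ s' t', r = X 0 * s' + X 1 * t' := by
  have hm : r ∈ (Ideal.span {X 0, X 1} : Ideal R7) := by
    have h1 : X 2 * r ∈ (Ideal.span {X 0, X 1} : Ideal R7) := by
      rw [h]
      exact Ideal.add_mem _ (Ideal.mul_mem_right _ _ (Ideal.subset_span (by simp)))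
        (Ideal.mul_mem_right _ _ (Ideal.subset_span (by simp)))
    have hs : ({X 0, X 1} : Set R7) = X '' ({0, 1} : Set (Fin 3)) := by
      simp [Set.image_pair]
    rw [hs, mem_ideal_span_X_image] at h1 ⊢
    intro m hm
    have h2 := h1 (Finsupp.single 2 1 + m) (by
      rw [mem_support_iff, coeff_X_mul]; exact mem_support_iff.1 hm)
    obtain ⟨i, hi, hi'⟩ := h2
    refine ⟨i, hi, ?_⟩
    rcases hi with rfl | rfl <;> simpa using hi'
  rw [Ideal.mem_span_pair] at hm
  obtain ⟨s', t', h⟩ := hm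
  exact ⟨s', t', by rw [← h]; ring⟩

lemma reg_y (v w : R7) (h : X 1 * v = X 0 * w) : X 0 ∣ v := by
  have : (X 0 : R7) ∣ X 1 * v := ⟨w, h⟩
  refine ((X_prime (i := 0)).dvd_or_dvd this).resolve_left ?_
  rw [X_dvd_X]
  simp
end KleinSpec
namespace KleinFinal
open KleinAlg KleinTor KleinSpec MvPolynomial MonoidalCategory

/-- first differential -/
noncomputable def d1 : (Fin 6 → R7) →ₗ[R7] R7 := D1 m0 m1 m2
/-- second differential -/
noncomputable def d2 : (Fin 6 → R7) →ₗ[R7] (Fin 6 → R7) :=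
  D2 (pderiv 0 f4) (pderiv 1 f4) (pderiv 2 f4) (pderiv 0 f6) (pderiv 1 f6) (pderiv 2 f6)
/-- third differential -/
noncomputable def d3 : R7 →ₗ[R7] (Fin 6 → R7) :=
  D3 (pderiv 0 f4) (pderiv 1 f4) (pderiv 2 f4) (pderiv 0 f6) (pderiv 1 f6) (pderiv 2 f6)

lemma d3_inj : Function.Injective d3 := D3_inj a0_ne
lemma d2_d3 (r : R7) : d2 (d3 r) = 0 := D2_D3 _ _ _ _ _ _ r
lemma d1_d2 (w : Fin 6 → R7) : d1 (d2 w) = 0 := D1_D2 rfl rfl rfl w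
lemma ex2 (w : Fin 6 → R7) (hw : d2 w = 0) : ∃ r, d3 r = w :=
  exact2 rfl rfl rfl m0_ne m1_ne m2_ne a0_ne a01 w hw

lemma socle (q : Fin 6 → R7) (hx : (X 0 : R7) • q ∈ LinearMap.range d2)
    (hy : (X 1 : R7) • q ∈ LinearMap.range d2) (hz : (X 2 : R7) • q ∈ LinearMap.range d2) :
    q ∈ LinearMap.range d2 := by
  refine depth_step (x := X 0) (y := X 1) (z := X 2) d3 d2 d3_inj ex2 d2_d3 ?_ ?_ ?_ q hx hy hz
  · intro r t s h
    exact reg_z r s t h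
  · intro v w h
    have : ∀ i, ∃ s, v i = X 0 * s := fun i => reg_y (v i) (w i) (congrFun h i)
    choose s hs using this
    exact ⟨s, funext hs⟩
  · intro r h
    exact (smul_eq_zero.1 h).resolve_left (X_ne_zero 0)

lemma ex1 (q : Fin 6 → R7) (hq : d1 q = 0) : ∃ w, d2 w = q := by
  have h0 : pderiv 0 f4 ^ 2 • q ∈ LinearMap.range d2 := loc0 rfl rfl rfl m1_ne m12 q hq
  have h1 : pderiv 1 f4 ^ 2 • q ∈ LinearMap.range d2 := loc1 rfl rfl rfl m2_ne m20 q hq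
  have h2 : pderiv 2 f4 ^ 2 • q ∈ LinearMap.range d2 := loc2 rfl rfl rfl m0_ne m01 q hq
  have key : ∀ i : Fin 3, ∃ n : ℕ, (X i : R7) ^ n • q ∈ LinearMap.range d2 := by
    intro i
    obtain ⟨n, hn⟩ := X_mem_radical i
    refine ⟨n, ?_⟩
    have hle : (Ideal.span {pderiv 0 f4 ^ 2, pderiv 1 f4 ^ 2, pderiv 2 f4 ^ 2} : Ideal R7) ≤
        (LinearMap.range d2).comap (LinearMap.toSpanSingleton R7 _ q) := by
      rw [Ideal.span, Submodule.span_le]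
      rintro c (rfl | rfl | rfl)
      · exact h0
      · exact h1
      · exact h2
    exact hle hn
  obtain ⟨i, hi⟩ := key 0
  obtain ⟨j, hj⟩ := key 1
  obtain ⟨k, hk⟩ := key 2
  exact nilp_step (LinearMap.range d2) socle _ i j k rfl q hi hj hk

lemma klein_eq : kleinIdeal = Ideal.span {m0, m1, m2} := by
  have e0 : pderiv 1 f4 * pderiv 2 f6 - pderiv 1 f6 * pderiv 2 f4 = m0 := by rw [m0]; ring
  have e1 : pderiv 0 f4 * pderiv 2 f6 - pderiv 0 f6 * pderiv 2 f4 = -m1 := by rw [m1]; ring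
  have e2 : pderiv 0 f4 * pderiv 1 f6 - pderiv 0 f6 * pderiv 1 f4 = m2 := by rw [m2]; ring
  rw [kleinIdeal, e0, e1, e2]
  apply le_antisymm
  · rw [Ideal.span_le]
    rintro c (rfl | rfl | rfl)
    · exact Ideal.subset_span (by simp)
    · exact neg_mem (Ideal.subset_span (by simp))
    · exact Ideal.subset_span (by simp)
  · rw [Ideal.span_le]
    rintro c (rfl | rfl | rfl)
    · exact Ideal.subset_span (by simp)
    · exact neg_mem_iff.1 (Ideal.subset_span (by simp))
    · exact Ideal.subset_span (by simp)

lemma range_d1 : LinearMap.range d1 = (kleinIdeal ^ 2 : Ideal R7) := by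
  rw [d1, D1, Fintype.range_linearCombination, klein_eq, sq, Ideal.span_mul_span']
  apply le_antisymm
  · rw [Submodule.span_le]
    rintro c ⟨i, rfl⟩
    apply Ideal.subset_span
    fin_cases i
    · exact Set.mul_mem_mul (by simp) (by simp)
    · exact Set.mul_mem_mul (by simp) (by simp)
    · exact Set.mul_mem_mul (by simp) (by simp)
    · exact Set.mul_mem_mul (by simp) (by simp)
    · exact Set.mul_mem_mul (by simp) (by simp)
    · exact Set.mul_mem_mul (by simp) (by simp)
  · rw [Ideal.span_le]
    rintro c ⟨s, hs, t, ht, rfl⟩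
    apply Submodule.subset_span
    rcases hs with rfl | rfl | rfl <;> rcases ht with rfl | rfl | rfl
    · exact ⟨0, rfl⟩
    · exact ⟨3, rfl⟩
    · exact ⟨4, rfl⟩
    · exact ⟨3, mul_comm _ _⟩
    · exact ⟨1, rfl⟩
    · exact ⟨5, rfl⟩
    · exact ⟨4, mul_comm _ _⟩
    · exact ⟨5, mul_comm _ _⟩
    · exact ⟨2, rfl⟩

lemma mem_m7 (p : R7) : p ∈ m7 ↔ constantCoeff p = 0 := by
  constructor
  · intro h
    have : m7 ≤ RingHom.ker (constantCoeff (σ := Fin 3) (R := K7)) := by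
      rw [m7, Ideal.span_le]
      rintro c (rfl | rfl | rfl) <;> simp
    exact this h
  · intro h
    have hs : ({X 0, X 1, X 2} : Set R7) = X '' (Set.univ : Set (Fin 3)) := by
      ext t
      simp [Fin.exists_fin_succ, eq_comm]
    rw [m7, hs, mem_ideal_span_X_image]
    intro m hm
    by_contra hc
    push Not at hc
    have : m = 0 := by ext i; simpa using hc i trivial
    rw [this, mem_support_iff] at hm
    exact hm h

lemma a_mem (i : Fin 3) : pderiv i f4 ∈ m7 := by
  rw [mem_m7]
  fin_cases i <;> simp [a0_eq, a1_eq, a2_eq]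
lemma b_mem (i : Fin 3) : pderiv i f6 ∈ m7 := by
  rw [mem_m7]
  fin_cases i <;> simp [b0_eq, b1_eq, b2_eq]

lemma mem_smul_top {n : ℕ} (I : Ideal R7) (w : Fin n → R7) (h : ∀ i, w i ∈ I) :
    w ∈ I • (⊤ : Submodule R7 (Fin n → R7)) := by
  rw [pi_eq_sum_univ' w]
  exact Submodule.sum_mem _ fun i _ => Submodule.smul_mem_smul (h i) trivial

lemma d3_mem (r : R7) (i : Fin 6) : d3 r i ∈ m7 := by
  rw [d3, D3_apply]
  fin_cases i
  · exact m7.mul_mem_left _ (b_mem 0)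
  · exact m7.mul_mem_left _ (b_mem 1)
  · exact m7.mul_mem_left _ (b_mem 2)
  · exact neg_mem (m7.mul_mem_left _ (a_mem 0))
  · exact neg_mem (m7.mul_mem_left _ (a_mem 1))
  · exact neg_mem (m7.mul_mem_left _ (a_mem 2))

lemma d2_mem (w : Fin 6 → R7) (i : Fin 6) : d2 w i ∈ m7 := by
  rw [d2, D2_apply]
  have A (i j) : pderiv i f4 * w j ∈ m7 := m7.mul_mem_right _ (a_mem i)
  have B (i j) : pderiv i f6 * w j ∈ m7 := m7.mul_mem_right _ (b_mem i)
  fin_cases i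
  · exact add_mem (A _ _) (B _ _)
  · exact add_mem (A _ _) (B _ _)
  · exact add_mem (A _ _) (B _ _)
  · exact add_mem (add_mem (add_mem (A _ _) (A _ _)) (B _ _)) (B _ _)
  · exact add_mem (add_mem (add_mem (A _ _) (A _ _)) (B _ _)) (B _ _)
  · exact add_mem (add_mem (add_mem (A _ _) (A _ _)) (B _ _)) (B _ _)

lemma klein_le : kleinIdeal ^ 2 ≤ m7 := by
  refine (Ideal.pow_le_self two_ne_zero).trans ?_
  rw [klein_eq, Ideal.span_le]
  have h (i j k l) : pderiv i f4 * pderiv j f6 - pderiv k f4 * pderiv l f6 ∈ m7 :=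
    sub_mem (m7.mul_mem_right _ (a_mem i)) (m7.mul_mem_right _ (a_mem k))
  rintro c (rfl | rfl | rfl) <;> exact h _ _ _ _

/-- the residue field -/
noncomputable abbrev kk : ModuleCat R7 := ModuleCat.of R7 (R7 ⧸ m7)

/-- building short exact sequences -/
lemma mkSES {A B C : Type} [AddCommGroup A] [AddCommGroup B] [AddCommGroup C] [Module R7 A]
    [Module R7 B] [Module R7 C] (f : A →ₗ[R7] B) (g : B →ₗ[R7] C) (hf : Function.Injective f)
    (hg : Function.Surjective g) (h : Function.Exact f g) :
    (ShortComplex.mk (ModuleCat.ofHom f) (ModuleCat.ofHom g)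
      (by rw [← ModuleCat.ofHom_comp, h.linearMap_comp_eq_zero]; rfl)).ShortExact :=
  { exact := (ShortComplex.ShortExact.moduleCat_exact_iff_function_exact _).2 h
    mono_f := (ModuleCat.mono_iff_injective _).2 hf
    epi_g := (ModuleCat.epi_iff_surjective _).2 hg }

/-- Conclusions about Tor for a minimal cover. -/
def CoverConcl (A B C : Type) [AddCommGroup A] [AddCommGroup B] [AddCommGroup C] [Module R7 A]
    [Module R7 B] [Module R7 C] : Prop :=
    (∀ n, Nonempty (((Tor (ModuleCat R7) (n+2)).obj (ModuleCat.of R7 C)).obj kk ≅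
      ((Tor (ModuleCat R7) (n+1)).obj (ModuleCat.of R7 A)).obj kk)) ∧
    Nonempty (((Tor (ModuleCat R7) 1).obj (ModuleCat.of R7 C)).obj kk ≅ ModuleCat.of R7 A ⊗ kk) ∧
    Nonempty (ModuleCat.of R7 B ⊗ kk ≅ ModuleCat.of R7 C ⊗ kk)

/-- All consequences of a minimal cover. -/
lemma cover {A B C : Type} [AddCommGroup A] [AddCommGroup B] [AddCommGroup C] [Module R7 A]
    [Module R7 B] [Module R7 C] [Module.Flat R7 B] (f : A →ₗ[R7] B) (g : B →ₗ[R7] C)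
    (hf : Function.Injective f)
    (hg : Function.Surjective g) (h : Function.Exact f g)
    (hm : ∀ s, f s ∈ m7 • (⊤ : Submodule R7 B)) :
    CoverConcl A B C := by
  have hS := mkSES f g hf hg h
  have h0 : (ModuleCat.ofHom f) ▷ kk = 0 := whisker_zero _ m7 hm
  refine ⟨fun n => ?_, ?_, ?_⟩
  · have : Module.Flat R7 (ShortComplex.mk (ModuleCat.ofHom f) (ModuleCat.ofHom g)
      (by rw [← ModuleCat.ofHom_comp, h.linearMap_comp_eq_zero]; rfl)).X₂ := ‹Module.Flat R7 B›
    exact tor_shift hS kk n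
  · have : Module.Flat R7 (ShortComplex.mk (ModuleCat.ofHom f) (ModuleCat.ofHom g)
      (by rw [← ModuleCat.ofHom_comp, h.linearMap_comp_eq_zero]; rfl)).X₂ := ‹Module.Flat R7 B›
    exact tor_one hS kk h0
  · exact tens_iso hS kk h0

lemma cov1 : CoverConcl (kleinIdeal ^ 2 : Ideal R7) R7 (R7 ⧸ kleinIdeal ^ 2) := cover (Submodule.subtype (kleinIdeal ^ 2)) (Submodule.mkQ (kleinIdeal ^ 2))
  (Submodule.subtype_injective _) (Submodule.mkQ_surjective _)
  (LinearMap.exact_subtype_mkQ _) (fun s => by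
    have := Submodule.smul_mem_smul (N := (⊤ : Submodule R7 R7)) (klein_le s.2)
      (Submodule.mem_top (x := (1 : R7)))
    simpa using this)

/-- first differential, onto its image -/
noncomputable def d1' : (Fin 6 → R7) →ₗ[R7] (kleinIdeal ^ 2 : Ideal R7) :=
  d1.codRestrict _ (fun w => by rw [← range_d1]; exact ⟨w, rfl⟩)

lemma cov2 : CoverConcl (LinearMap.ker d1) (Fin 6 → R7) (kleinIdeal ^ 2 : Ideal R7) := cover (Submodule.subtype (LinearMap.ker d1)) d1'
  (Submodule.subtype_injective _)
  (by
    rintro ⟨c, hc⟩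
    have hc' := hc
    rw [← range_d1] at hc'
    obtain ⟨w, hw⟩ := hc'
    exact ⟨w, Subtype.ext hw⟩)
  (by
    intro w
    constructor
    · intro h
      exact ⟨⟨w, congrArg Subtype.val h⟩, rfl⟩
    · rintro ⟨v, rfl⟩
      exact Subtype.ext v.2)
  (fun s => by
    obtain ⟨w, hw⟩ := ex1 s.1 s.2
    apply mem_smul_top
    intro i
    rw [Submodule.subtype_apply, ← hw]
    exact d2_mem w i)

/-- second differential, onto its image -/
noncomputable def d2' : (Fin 6 → R7) →ₗ[R7] LinearMap.ker d1 :=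
  d2.codRestrict _ (fun w => d1_d2 w)

lemma cov3 : CoverConcl R7 (Fin 6 → R7) (LinearMap.ker d1) := cover d3 d2' d3_inj
  (by
    rintro ⟨c, hc⟩
    obtain ⟨w, hw⟩ := ex1 c hc
    exact ⟨w, Subtype.ext hw⟩)
  (by
    intro w
    constructor
    · intro h
      exact ex2 w (congrArg Subtype.val h)
    · rintro ⟨v, rfl⟩
      exact Subtype.ext (d2_d3 v))
  (fun s => mem_smul_top _ _ (d3_mem s))

lemma finrank_kk : Module.finrank K7 (R7 ⧸ m7) = 1 := by
  have h1 : (1 : R7 ⧸ m7) ≠ 0 := by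
    intro h
    have : (1 : R7) ∈ m7 := Ideal.Quotient.eq_zero_iff_mem.1 h
    rw [mem_m7] at this
    simp at this
  refine (finrank_eq_one_iff_of_nonzero' (1 : R7 ⧸ m7) h1).2 ?_
  intro w
  obtain ⟨p, rfl⟩ := Ideal.Quotient.mk_surjective w
  refine ⟨constantCoeff p, ?_⟩
  have : C (constantCoeff p) - p ∈ m7 := by rw [mem_m7]; simp
  have h2 := (Ideal.Quotient.eq (I := m7)).2 this
  rw [← h2]
  change Ideal.Quotient.mk m7 (constantCoeff p • (1 : R7)) = _
  rw [smul_eq_C_mul, mul_one]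

lemma finrank_of_equiv {M : Type} [AddCommGroup M] [Module R7 M] {n : ℕ}
    (L : M ≃ₗ[R7] (Fin n → R7 ⧸ m7)) :
    @Module.finrank K7 M _ _ (Module.compHom _ (algebraMap K7 R7)) = n := by
  letI : Module K7 M := Module.compHom _ (algebraMap K7 R7)
  haveI : IsScalarTower K7 R7 M := IsScalarTower.of_algebraMap_smul fun r x => rfl
  have : Module.Finite K7 (R7 ⧸ m7) :=
    Module.finite_of_finrank_pos (by rw [finrank_kk]; norm_num)
  have e := (L.restrictScalars K7).finrank_eq
  rw [Module.finrank_pi_fintype, finrank_kk] at e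
  simpa using e

/-- `Rⁿ ⊗ k ≃ kⁿ` -/
noncomputable def eqPi (n : ℕ) : (ModuleCat.of R7 (Fin n → R7) ⊗ kk : ModuleCat R7) ≃ₗ[R7]
    (Fin n → R7 ⧸ m7) :=
  (TensorProduct.comm R7 (Fin n → R7) (R7 ⧸ m7)).trans
    (TensorProduct.piScalarRight R7 R7 (R7 ⧸ m7) (Fin n))

/-- `R ⊗ k ≃ k` -/
noncomputable def eqOne : (ModuleCat.of R7 R7 ⊗ kk : ModuleCat R7) ≃ₗ[R7]
    (Fin 1 → R7 ⧸ m7) :=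
  (TensorProduct.lid R7 (R7 ⧸ m7)).trans (LinearEquiv.funUnique (Fin 1) R7 (R7 ⧸ m7)).symm

lemma t0 : torDimK 0 = 1 := by
  obtain ⟨e⟩ := cov1.2.2
  exact finrank_of_equiv (((torZero _ kk ≪≫ e.symm).toLinearEquiv).trans eqOne)

lemma t1 : torDimK 1 = 6 := by
  obtain ⟨e⟩ := cov1.2.1
  obtain ⟨e'⟩ := cov2.2.2
  exact finrank_of_equiv (((e ≪≫ e'.symm).toLinearEquiv).trans (eqPi 6))

lemma t2 : torDimK 2 = 6 := by
  obtain ⟨e0⟩ := cov1.1 0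
  obtain ⟨e⟩ := cov2.2.1
  obtain ⟨e'⟩ := cov3.2.2
  exact finrank_of_equiv (((e0 ≪≫ e ≪≫ e'.symm).toLinearEquiv).trans (eqPi 6))

lemma t3 : torDimK 3 = 1 := by
  obtain ⟨e0⟩ := cov1.1 1
  obtain ⟨e1⟩ := cov2.1 0
  obtain ⟨e⟩ := cov3.2.1
  exact finrank_of_equiv (((e0 ≪≫ e1 ≪≫ e).toLinearEquiv).trans eqOne)

lemma t4 : torDimK 4 = 0 := by
  obtain ⟨e0⟩ := cov1.1 2
  obtain ⟨e1⟩ := cov2.1 1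
  obtain ⟨e2⟩ := cov3.1 0
  have hz := isZero_tor_flat kk (ModuleCat.of R7 R7) 0
  have hz' := hz.of_iso (e0 ≪≫ e1 ≪≫ e2)
  have := ModuleCat.subsingleton_of_isZero hz'
  exact @Module.finrank_zero_of_subsingleton K7 _ _ _ (Module.compHom _ (algebraMap K7 R7)) _ this
end KleinFinal

/-- The Betti numbers of `R/I²`: the `K`-dimensions of `Tor_i^R(R/I², k)`
for `i = 0,…,4` are `1, 6, 6, 1, 0`. -/
theorem stmt16 :
    torDimK 0 = 1 ∧ torDimK 1 = 6 ∧ torDimK 2 = 6 ∧ torDimK 3 = 1 ∧ torDimK 4 = 0 :=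
  ⟨KleinFinal.t0, KleinFinal.t1, KleinFinal.t2, KleinFinal.t3, KleinFinal.t4⟩
end
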